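/- arXiv:1911.13268 — 6 statements merged into one kernel-verified Lean document; each statement's English description precedes it below -/
import Mathlib

section
/- Let A ∈ ℝ^{n×m}, let q ∈ [2,∞], κ ≥ 1 and r ≥ 1. Then the minimum of ‖A − ΠA‖ over all orthogonal projection matrices Π ∈ ℝ^{n×n} of rank at most r with ‖Π‖_{q→2} ≤ κ equals the minimum of ‖A − B‖ over all matrices B ∈ ℝ^{n×m} of rank at most r such that the orthogonal projection Π(B) onto the column space of B satisfies ‖Π(B)‖_{q→2} ≤ κ, where ‖·‖ denotes the spectral norm. The same equality holds when ‖·‖ is the Frobenius norm. -/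
open scoped BigOperators ENNReal
open Matrix

/-- The `ℓ_q` norm of a real vector, for `q ∈ [1,∞]` given as an extended nonnegative real
(`q = ⊤` is the max/sup norm). -/
noncomputable def vecNorm {ι : Type*} [Fintype ι] (q : ℝ≥0∞) (v : ι → ℝ) : ℝ :=
  if q = ⊤ then ⨆ i, |v i| else (∑ i, |v i| ^ q.toReal) ^ (1 / q.toReal)

/-- The `q → p` operator norm of a real matrix:
`‖M‖_{q→p} = sup { ‖Mx‖_p : ‖x‖_q ≤ 1 }`. -/
noncomputable def opNorm {ι₁ ι₂ : Type*} [Fintype ι₁] [Fintype ι₂] (q p : ℝ≥0∞)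
    (M : Matrix ι₁ ι₂ ℝ) : ℝ :=
  sSup {y : ℝ | ∃ x : ι₂ → ℝ, vecNorm q x ≤ 1 ∧ y = vecNorm p (M.mulVec x)}

/-- The squared Frobenius norm of a real matrix. -/
noncomputable def frobSq {ι₁ ι₂ : Type*} [Fintype ι₁] [Fintype ι₂] (M : Matrix ι₁ ι₂ ℝ) : ℝ :=
  ∑ i, ∑ j, (M i j) ^ 2

/-!
If `P` is an orthogonal projection with `P B = B`, then `A - P A = (1 - P) (A - B)`, and
orthogonal projections contract both norms, so `P` does at least as well as `B`. Conversely, the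
column space of `B = P A` lies in the range of `P`, so the orthogonal projection `Q` onto it
satisfies `Q = Q P`, whence `‖Q‖_{q→2} ≤ ‖P‖_{q→2}` and `B` is feasible.
-/

theorem vecNorm_eq_norm_toLp {ι : Type*} [Fintype ι] {q : ℝ≥0∞} (hq : q ≠ 0) (v : ι → ℝ) :
    vecNorm q v = ‖WithLp.toLp q v‖ := by
  rcases eq_or_ne q ⊤ with rfl | hq_top
  · simp only [vecNorm, ↓reduceIte, PiLp.norm_eq_ciSup, Real.norm_eq_abs]
  · simp only [vecNorm, if_neg hq_top, PiLp.norm_eq_sum (ENNReal.toReal_pos hq hq_top),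
      Real.norm_eq_abs]

section OperatorNorm

variable {ι τ σ : Type*} [Fintype ι] [Fintype τ] [Fintype σ] {p q s : ℝ≥0∞}

theorem opNorm_eq_norm_toLpLin [Fact (1 ≤ q)] [Fact (1 ≤ p)] [DecidableEq τ]
    (M : Matrix ι τ ℝ) : opNorm q p M = ‖(toLpLin q p M).toContinuousLinearMap‖ := by
  have hq : q ≠ 0 := (zero_lt_one.trans_le Fact.out).ne'
  have hp : p ≠ 0 := (zero_lt_one.trans_le Fact.out).ne'
  rw [← ContinuousLinearMap.sSup_unitClosedBall_eq_norm, opNorm]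
  congr 1
  ext y
  simp only [vecNorm_eq_norm_toLp hq, vecNorm_eq_norm_toLp hp, Set.mem_ofPred_eq, Set.mem_image,
    mem_closedBall_zero_iff]
  exact ⟨fun ⟨x, hx, hy⟩ ↦ ⟨WithLp.toLp q x, hx, hy.symm⟩,
    fun ⟨x, hx, hy⟩ ↦ ⟨x.ofLp, hx, hy.symm⟩⟩

theorem opNorm_nonneg [Fact (1 ≤ q)] [Fact (1 ≤ p)] (M : Matrix ι τ ℝ) : 0 ≤ opNorm q p M := by
  classical
  rw [opNorm_eq_norm_toLpLin]
  exact norm_nonneg _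

theorem vecNorm_mulVec_le [Fact (1 ≤ q)] [Fact (1 ≤ p)] (M : Matrix ι τ ℝ) (v : τ → ℝ) :
    vecNorm p (M *ᵥ v) ≤ opNorm q p M * vecNorm q v := by
  classical
  have hq : q ≠ 0 := (zero_lt_one.trans_le Fact.out).ne'
  have hp : p ≠ 0 := (zero_lt_one.trans_le Fact.out).ne'
  rw [opNorm_eq_norm_toLpLin, vecNorm_eq_norm_toLp hq, vecNorm_eq_norm_toLp hp]
  exact (toLpLin q p M).toContinuousLinearMap.le_opNorm (WithLp.toLp q v)

theorem opNorm_mul_le [Fact (1 ≤ q)] [Fact (1 ≤ p)] [Fact (1 ≤ s)]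
    (M : Matrix ι τ ℝ) (N : Matrix τ σ ℝ) :
    opNorm q s (M * N) ≤ opNorm p s M * opNorm q p N := by
  classical
  simp only [opNorm_eq_norm_toLpLin, toLpLin_mul q p s M N]
  exact (toLpLin p s M).toContinuousLinearMap.opNorm_comp_le (toLpLin q p N).toContinuousLinearMap

theorem frobSq_eq_sum_vecNorm_col_sq (M : Matrix ι τ ℝ) :
    frobSq M = ∑ j, vecNorm 2 (M.col j) ^ 2 := by
  simp only [frobSq, vecNorm_eq_norm_toLp two_ne_zero, EuclideanSpace.real_norm_sq_eq, col_apply]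
  exact Finset.sum_comm

theorem sqrt_frobSq_mul_le (M : Matrix ι τ ℝ) (N : Matrix τ σ ℝ) :
    √(frobSq (M * N)) ≤ opNorm 2 2 M * √(frobSq N) := by
  rw [← Real.sqrt_sq (opNorm_nonneg M), ← Real.sqrt_mul (sq_nonneg _)]
  apply Real.sqrt_le_sqrt
  rw [frobSq_eq_sum_vecNorm_col_sq, frobSq_eq_sum_vecNorm_col_sq, Finset.mul_sum]
  refine Finset.sum_le_sum fun j _ ↦ ?_
  rw [← mul_pow]
  have hnonneg : 0 ≤ vecNorm 2 ((M * N).col j) := by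
    rw [vecNorm_eq_norm_toLp two_ne_zero]
    exact norm_nonneg _
  exact pow_le_pow_left₀ hnonneg (vecNorm_mulVec_le M (N.col j)) 2

end OperatorNorm

section Projection

variable {ι τ : Type*} [Fintype ι] [Fintype τ] {P Q : Matrix ι ι ℝ} {q : ℝ≥0∞}

theorem isStarProjection_iff_isSymm : IsStarProjection P ↔ P.IsSymm ∧ P * P = P := by
  rw [isStarProjection_iff, and_comm, isSelfAdjoint_iff, star_eq_conjTranspose,
    conjTranspose_eq_transpose_of_trivial]
  rfl

open scoped Matrix.Norms.L2Operator in
theorem opNorm_two_two_le_one_of_isStarProjection (hP : IsStarProjection P) :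
    opNorm 2 2 P ≤ 1 := by
  classical
  rw [opNorm_eq_norm_toLpLin]
  exact hP.norm_le

theorem opNorm_two_mul_le_of_isStarProjection [Fact (1 ≤ q)] (hP : IsStarProjection P)
    (M : Matrix ι τ ℝ) : opNorm q 2 (P * M) ≤ opNorm q 2 M :=
  (opNorm_mul_le P M).trans <|
    mul_le_of_le_one_left (opNorm_nonneg M) (opNorm_two_two_le_one_of_isStarProjection hP)

theorem sqrt_frobSq_mul_le_of_isStarProjection (hP : IsStarProjection P) (M : Matrix ι τ ℝ) :
    √(frobSq (P * M)) ≤ √(frobSq M) :=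
  (sqrt_frobSq_mul_le P M).trans <|
    mul_le_of_le_one_left (Real.sqrt_nonneg _) (opNorm_two_two_le_one_of_isStarProjection hP)

theorem mul_eq_self_iff_range_le (hP : IsIdempotentElem P) {B : Matrix ι τ ℝ} :
    P * B = B ↔ LinearMap.range B.mulVecLin ≤ LinearMap.range P.mulVecLin := by
  classical
  refine ⟨fun h ↦ ?_, fun h ↦ ext_of_mulVec_single fun j ↦ ?_⟩
  · rw [← h, mulVecLin_mul]
    exact LinearMap.range_comp_le_range _ _
  · obtain ⟨z, hz : P *ᵥ z = B *ᵥ Pi.single j 1⟩ := h ⟨Pi.single j 1, rfl⟩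
    rw [← mulVec_mulVec, ← hz, mulVec_mulVec, hP.eq]

theorem opNorm_two_le_of_range_le [Fact (1 ≤ q)] (hQ : IsStarProjection Q)
    (hP : IsStarProjection P)
    (h : LinearMap.range Q.mulVecLin ≤ LinearMap.range P.mulVecLin) :
    opNorm q 2 Q ≤ opNorm q 2 P := by
  have hPQ : P * Q = Q := (mul_eq_self_iff_range_le hP.isIdempotentElem).2 h
  have hQP : Q * P = Q := by
    simpa only [star_mul, hP.isSelfAdjoint.star_eq, hQ.isSelfAdjoint.star_eq]
      using congrArg star hPQ
  rw [← hQP]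
  exact opNorm_two_mul_le_of_isStarProjection hQ P

/-- A subspace of `ι → ℝ` regarded as a subspace of `EuclideanSpace ℝ ι`. It gives access to
orthogonal projections, as `ι → ℝ` itself carries the sup norm. -/
abbrev euclideanSubmodule (V : Submodule ℝ (ι → ℝ)) : Submodule ℝ (EuclideanSpace ℝ ι) :=
  V.comap (WithLp.linearEquiv 2 ℝ (ι → ℝ)).toLinearMap

variable [DecidableEq ι]

/-- The matrix of the orthogonal projection of `ℝ^ι` onto `V`, with respect to the Euclidean inner
product; the paper's `Π(B)` is the case where `V` is the column space of `B`. -/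
noncomputable def orthProj (V : Submodule ℝ (ι → ℝ)) : Matrix ι ι ℝ :=
  (toEuclideanCLM (𝕜 := ℝ)).symm (euclideanSubmodule V).starProjection

theorem toEuclideanCLM_orthProj (V : Submodule ℝ (ι → ℝ)) :
    toEuclideanCLM (𝕜 := ℝ) (orthProj V) = (euclideanSubmodule V).starProjection :=
  toEuclideanCLM.apply_symm_apply _

theorem isStarProjection_orthProj (V : Submodule ℝ (ι → ℝ)) : IsStarProjection (orthProj V) where
  isIdempotentElem := EquivLike.injective (toEuclideanCLM (n := ι) (𝕜 := ℝ)) <| by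
    rw [map_mul, toEuclideanCLM_orthProj, isStarProjection_starProjection.isIdempotentElem.eq]
  isSelfAdjoint := EquivLike.injective (toEuclideanCLM (n := ι) (𝕜 := ℝ)) <| by
    rw [map_star, toEuclideanCLM_orthProj, isStarProjection_starProjection.isSelfAdjoint.star_eq]

theorem range_orthProj (V : Submodule ℝ (ι → ℝ)) :
    LinearMap.range (orthProj V).mulVecLin = V := by
  have toLp_orthProj_mulVec (x : ι → ℝ) : WithLp.toLp 2 (orthProj V *ᵥ x) =
      (euclideanSubmodule V).starProjection (WithLp.toLp 2 x) := by
    rw [← toEuclideanCLM_orthProj, toEuclideanCLM_toLp]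
  ext y
  constructor
  · rintro ⟨x, rfl⟩
    change WithLp.toLp 2 (orthProj V *ᵥ x) ∈ euclideanSubmodule V
    rw [toLp_orthProj_mulVec]
    exact Submodule.starProjection_apply_mem _ _
  · intro (hy : WithLp.toLp 2 y ∈ euclideanSubmodule V)
    refine ⟨y, WithLp.toLp_injective 2 ?_⟩
    rw [mulVecLin_apply, toLp_orthProj_mulVec, Submodule.starProjection_eq_self_iff.2 hy]

end Projection

section Objective

variable {ι τ : Type*} [Fintype ι]

theorem apply_sub_mul_le_apply_sub {N : Matrix ι τ ℝ → ℝ}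
    (hN : ∀ (Q : Matrix ι ι ℝ) M, IsStarProjection Q → N (Q * M) ≤ N M)
    {P : Matrix ι ι ℝ} (hP : IsStarProjection P) (A : Matrix ι τ ℝ) {B : Matrix ι τ ℝ}
    (hPB : P * B = B) :
    N (A - P * A) ≤ N (A - B) := by
  classical
  have hfactor : A - P * A = (1 - P) * (A - B) := by
    rw [Matrix.mul_sub, Matrix.sub_mul, Matrix.sub_mul, hPB, Matrix.one_mul, Matrix.one_mul,
      sub_self, sub_zero]
  rw [hfactor]
  exact hN (1 - P) (A - B) hP.one_sub

theorem low_rank_objective_equivalence_general [Fintype τ] (A : Matrix ι τ ℝ) {q : ℝ≥0∞}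
    (hq : 1 ≤ q) {κ : ℝ} (_hκ : 0 ≤ κ) (r : ℕ) {N : Matrix ι τ ℝ → ℝ}
    (hN : ∀ (Q : Matrix ι ι ℝ) M, IsStarProjection Q → N (Q * M) ≤ N M) :
    sInf {x : ℝ | ∃ P : Matrix ι ι ℝ, IsStarProjection P ∧ P.rank ≤ r ∧ opNorm q 2 P ≤ κ ∧
          x = N (A - P * A)} =
      sInf {x : ℝ | ∃ B : Matrix ι τ ℝ, ∃ P : Matrix ι ι ℝ, B.rank ≤ r ∧ IsStarProjection P ∧
          LinearMap.range P.mulVecLin = LinearMap.range B.mulVecLin ∧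
          opNorm q 2 P ≤ κ ∧ x = N (A - B)} := by
  classical
  have : Fact (1 ≤ q) := ⟨hq⟩
  apply csInf_eq_csInf_of_forall_exists_le
  · rintro _ ⟨P, hP, hrank, hκ, rfl⟩
    set Q := orthProj (LinearMap.range (P * A).mulVecLin)
    have hQ : IsStarProjection Q := isStarProjection_orthProj _
    have hrange : LinearMap.range Q.mulVecLin = LinearMap.range (P * A).mulVecLin :=
      range_orthProj _
    have hle : LinearMap.range Q.mulVecLin ≤ LinearMap.range P.mulVecLin := by
      rw [hrange, ← mul_eq_self_iff_range_le hP.isIdempotentElem, ← Matrix.mul_assoc,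
        hP.isIdempotentElem.eq]
    exact ⟨_, ⟨P * A, Q, (rank_mul_le_left P A).trans hrank, hQ, hrange,
      (opNorm_two_le_of_range_le hQ hP hle).trans hκ, rfl⟩, le_rfl⟩
  · rintro _ ⟨B, P, hrank, hP, hrange, hκ, rfl⟩
    have hPB : P * B = B := (mul_eq_self_iff_range_le hP.isIdempotentElem).2 hrange.ge
    have hrankP : P.rank ≤ r := by rwa [Matrix.rank, hrange]
    exact ⟨_, ⟨P, hP, hrankP, hκ, rfl⟩, apply_sub_mul_le_apply_sub hN hP A hPB⟩

end Objective

/-- Minimizing `‖A − ΠA‖` over rank-`≤ r` orthogonal projections `Π` with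
`‖Π‖_{q→2} ≤ κ` gives the same value as minimizing `‖A − B‖` over rank-`≤ r` matrices `B`
whose column space has a `(κ,q)`-robust orthogonal projection, both for the spectral norm
(`‖·‖_{2→2}`) and for the Frobenius norm. -/
theorem low_rank_objective_equivalence {n m : ℕ} (A : Matrix (Fin n) (Fin m) ℝ)
    (q : ℝ≥0∞) (hq : 2 ≤ q) (κ : ℝ) (hκ : 1 ≤ κ) (r : ℕ) (hr : 1 ≤ r) :
    sInf {x : ℝ | ∃ P : Matrix (Fin n) (Fin n) ℝ, P.IsSymm ∧ P * P = P ∧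
          P.rank ≤ r ∧ opNorm q 2 P ≤ κ ∧ x = opNorm 2 2 (A - P * A)} =
      sInf {x : ℝ | ∃ B : Matrix (Fin n) (Fin m) ℝ, ∃ P : Matrix (Fin n) (Fin n) ℝ,
          B.rank ≤ r ∧ P.IsSymm ∧ P * P = P ∧
          LinearMap.range P.mulVecLin = LinearMap.range B.mulVecLin ∧
          opNorm q 2 P ≤ κ ∧ x = opNorm 2 2 (A - B)} ∧
    sInf {x : ℝ | ∃ P : Matrix (Fin n) (Fin n) ℝ, P.IsSymm ∧ P * P = P ∧
          P.rank ≤ r ∧ opNorm q 2 P ≤ κ ∧ x = Real.sqrt (frobSq (A - P * A))} =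
      sInf {x : ℝ | ∃ B : Matrix (Fin n) (Fin m) ℝ, ∃ P : Matrix (Fin n) (Fin n) ℝ,
          B.rank ≤ r ∧ P.IsSymm ∧ P * P = P ∧
          LinearMap.range P.mulVecLin = LinearMap.range B.mulVecLin ∧
          opNorm q 2 P ≤ κ ∧ x = Real.sqrt (frobSq (A - B))} := by
  simpa only [isStarProjection_iff_isSymm, and_assoc] using And.intro
    (low_rank_objective_equivalence_general A (one_le_two.trans hq) (zero_le_one.trans hκ) r
      (N := opNorm 2 2) fun Q M hQ ↦ opNorm_two_mul_le_of_isStarProjection hQ M)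
    (low_rank_objective_equivalence_general A (one_le_two.trans hq) (zero_le_one.trans hκ) r
      (N := fun M ↦ √(frobSq M)) fun Q M hQ ↦ sqrt_frobSq_mul_le_of_isStarProjection hQ M)
end

section
/- There is a universal constant c > 0 with the following property. Let A ∈ ℝ^{n×m} be a matrix each of whose columns A_j satisfies ‖A_j‖₂ ∈ [1/10, 10], and suppose there is a unit vector v ∈ ℝⁿ with ‖v‖₁ ≥ κ for some κ ≥ 2 such that Π* = vvᵀ satisfies Π*A = A (every column of A is a scalar multiple of v). Then there exists δ₀ > 0 (depending on A) such that for every δ ∈ (0, δ₀] there exist a matrix A' ∈ ℝ^{n×m} with max_{i,j} |A_{ij} − A'_{ij}| ≤ δ and a rank-one orthogonal projection matrix Π' = ūūᵀ (ū a unit vector) such that: (1) ‖Π'‖_{∞→2} < ‖Π*‖_{∞→2}; (2) Π'A' = A'; and (3) ‖A − Π'A‖_F ≥ c·δκ√m. -/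
open scoped BigOperators ENNReal
open Matrix

/-!
Since `A = v aᵀ`, it suffices to perturb `v`. Choose signs `e` with `|∑ eᵢ|vᵢ|| ≤ ‖v‖₂` and put
`dᵢ = eᵢ sign vᵢ`: this direction is almost orthogonal to `v`, while `‖d‖₂ ≥ ‖v‖₁` by
Cauchy–Schwarz. Replacing `d` by `-d` if necessary, the move from `v` to `w = v - ε d` does not
increase `‖·‖₁ / ‖·‖₂` to first order in `ε`. As `‖w‖₁` is exactly linear in small `ε > 0`, the
second-order growth of `‖w‖₂` makes the ratio strictly smaller. As `d` is far from
parallel to `v`, the distance from `v` to the line spanned by `w` is of order `ε ‖d‖₂ ≥ ε ‖v‖₁`.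
-/

open Filter Topology

section Norms

variable {ι ι₁ ι₂ : Type*} [Fintype ι] [Fintype ι₁] [Fintype ι₂]

lemma vecNorm_two_eq_sqrt_dotProduct (v : ι → ℝ) : vecNorm 2 v = √(v ⬝ᵥ v) := by
  simp [vecNorm, Real.sqrt_eq_rpow, dotProduct, sq]

lemma vecNorm_two_eq_one_iff (v : ι → ℝ) : vecNorm 2 v = 1 ↔ v ⬝ᵥ v = 1 := by
  rw [vecNorm_two_eq_sqrt_dotProduct, Real.sqrt_eq_one]

lemma vecNorm_two_smul (t : ℝ) (v : ι → ℝ) : vecNorm 2 (t • v) = |t| * vecNorm 2 v := by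
  rw [vecNorm_two_eq_sqrt_dotProduct, vecNorm_two_eq_sqrt_dotProduct, smul_dotProduct,
    dotProduct_smul, smul_eq_mul, smul_eq_mul, ← mul_assoc, Real.sqrt_mul (mul_self_nonneg t),
    Real.sqrt_mul_self_eq_abs]

lemma vecNorm_top_le_one_iff (x : ι → ℝ) : vecNorm ⊤ x ≤ 1 ↔ ∀ i, |x i| ≤ 1 := by
  rw [vecNorm, if_pos rfl]
  exact ⟨fun h i => (le_ciSup (Set.finite_range fun i => |x i|).bddAbove i).trans h,
    fun h => Real.iSup_le h zero_le_one⟩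

lemma abs_dotProduct_le_sum_abs {v x : ι → ℝ} (hx : ∀ i, |x i| ≤ 1) :
    |v ⬝ᵥ x| ≤ ∑ i, |v i| := by
  refine (Finset.abs_sum_le_sum_abs _ _).trans (Finset.sum_le_sum fun i _ => ?_)
  rw [abs_mul]
  exact mul_le_of_le_one_right (abs_nonneg _) (hx i)

lemma dotProduct_sign (v : ι → ℝ) : v ⬝ᵥ (fun i => (SignType.sign (v i) : ℝ)) = ∑ i, |v i| := by
  simp only [dotProduct, self_mul_sign]

lemma abs_sign_le_one (x : ℝ) : |(SignType.sign x : ℝ)| ≤ 1 := by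
  rcases lt_trichotomy x 0 with h | h | h <;> simp [h]

lemma opNorm_top_two_vecMulVec (u : ι₁ → ℝ) (v : ι₂ → ℝ) :
    opNorm ⊤ 2 (vecMulVec u v) = (∑ i, |v i|) * vecNorm 2 u := by
  have hu : 0 ≤ vecNorm 2 u := by
    rw [vecNorm_two_eq_sqrt_dotProduct]
    exact Real.sqrt_nonneg _
  have vecNorm_mulVec (x : ι₂ → ℝ) :
      vecNorm 2 (vecMulVec u v *ᵥ x) = |v ⬝ᵥ x| * vecNorm 2 u := by
    rw [vecMulVec_mulVec, op_smul_eq_smul, vecNorm_two_smul]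
  refine IsGreatest.csSup_eq ⟨⟨fun i => SignType.sign (v i), ?_, ?_⟩, ?_⟩
  · exact (vecNorm_top_le_one_iff _).2 fun i => abs_sign_le_one (v i)
  · rw [vecNorm_mulVec, dotProduct_sign, abs_of_nonneg (by positivity)]
  · rintro _ ⟨x, hx, rfl⟩
    rw [vecNorm_mulVec]
    exact mul_le_mul_of_nonneg_right
      (abs_dotProduct_le_sum_abs ((vecNorm_top_le_one_iff x).1 hx)) hu

lemma frobSq_vecMulVec (x : ι₁ → ℝ) (y : ι₂ → ℝ) :
    frobSq (vecMulVec x y) = (x ⬝ᵥ x) * (y ⬝ᵥ y) := by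
  simp only [frobSq, vecMulVec_apply, dotProduct, Finset.sum_mul_sum, ← sq, mul_pow]

lemma frobSq_vecMulVec_sub_proj {u : ι₁ → ℝ} (hu : u ⬝ᵥ u = 1) (v : ι₁ → ℝ) (a : ι₂ → ℝ) :
    frobSq (vecMulVec v a - vecMulVec u u * vecMulVec v a) =
      (v ⬝ᵥ v - (u ⬝ᵥ v) ^ 2) * (a ⬝ᵥ a) := by
  rw [vecMulVec_mul_vecMulVec, vecMulVec_smul, ← smul_vecMulVec, ← sub_vecMulVec,
    frobSq_vecMulVec]
  simp only [sub_dotProduct, dotProduct_sub, smul_dotProduct, dotProduct_smul, smul_eq_mul, hu,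
    dotProduct_comm v u]
  ring

end Norms

lemma exists_signs_norm_sum_smul_sq_le {ι E : Type*} [NormedAddCommGroup E]
    [InnerProductSpace ℝ E] (v : ι → E) (s : Finset ι) :
    ∃ e : ι → ℝ, (∀ i, |e i| = 1) ∧ ‖∑ i ∈ s, e i • v i‖ ^ 2 ≤ ∑ i ∈ s, ‖v i‖ ^ 2 := by
  classical
  induction s using Finset.induction_on with
  | empty => exact ⟨1, by simp, by simp⟩
  | insert a s ha ih =>
    obtain ⟨e, he, hes⟩ := ih
    have sum_update (t : ℝ) :
        ∑ i ∈ insert a s, Function.update e a t i • v i = t • v a + ∑ i ∈ s, e i • v i := by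
      rw [Finset.sum_insert ha, Function.update_self]
      congr 1
      exact Finset.sum_congr rfl fun i hi => by
        rw [Function.update_of_ne (ne_of_mem_of_not_mem hi ha)]
    have abs_update {t : ℝ} (ht : |t| = 1) (i : ι) : |Function.update e a t i| = 1 := by
      rcases eq_or_ne i a with rfl | hi
      · rwa [Function.update_self]
      · rw [Function.update_of_ne hi, he]
    obtain ⟨t, ht, hinner⟩ : ∃ t : ℝ, |t| = 1 ∧ t * inner ℝ (v a) (∑ i ∈ s, e i • v i) ≤ 0 := by
      rcases le_total (inner ℝ (v a) (∑ i ∈ s, e i • v i)) 0 with h | h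
      · exact ⟨1, abs_one, by linarith⟩
      · exact ⟨-1, by simp, by linarith⟩
    refine ⟨Function.update e a t, abs_update ht, ?_⟩
    rw [sum_update, norm_add_sq_real, real_inner_smul_left, norm_smul, Real.norm_eq_abs, ht,
      Finset.sum_insert ha]
    linarith

section DescentDirection

variable {ι : Type*} [Fintype ι]

/-- A direction `d` for moving `v` to `v - ε d`: its entries are at most `1`, it is almost
orthogonal to `v` yet long in Euclidean norm, and the move does not increase `‖·‖₁ / ‖·‖₂`
to first order. This last condition is `sum_abs_mul_le`, as `∑ i, d i * sign (v i)` is minus the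
derivative of `‖v - ε d‖₁` at `ε = 0` for `d` supported where `v` is. -/
structure IsDescentDirection (v d : ι → ℝ) : Prop where
  abs_le_one : ∀ i, |d i| ≤ 1
  eq_zero_of_eq_zero : ∀ i, v i = 0 → d i = 0
  dotProduct_sq_le : (d ⬝ᵥ v) ^ 2 ≤ v ⬝ᵥ v
  sum_abs_sq_le : (∑ i, |v i|) ^ 2 ≤ (d ⬝ᵥ d) * (v ⬝ᵥ v)
  sum_abs_mul_le : (∑ i, |v i|) * (d ⬝ᵥ v) ≤ (v ⬝ᵥ v) * ∑ i, d i * SignType.sign (v i)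

lemma exists_isDescentDirection (v : ι → ℝ) : ∃ d, IsDescentDirection v d := by
  obtain ⟨e, he, hbal⟩ := exists_signs_norm_sum_smul_sq_le (fun i => |v i|) Finset.univ
  set d : ι → ℝ := fun i => e i * SignType.sign (v i)
  have d_mul_v (i : ι) : d i * v i = e i * |v i| := by rw [mul_assoc, sign_mul_self]
  have abs_le_one (i : ι) : |d i| ≤ 1 := by
    rw [abs_mul, he, one_mul]
    exact abs_sign_le_one (v i)
  have eq_zero (i : ι) (hi : v i = 0) : d i = 0 := by simp [d, hi]
  have hdv : (d ⬝ᵥ v) ^ 2 ≤ v ⬝ᵥ v := by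
    simpa [dotProduct, d_mul_v, ← sq] using hbal
  have hdd : (∑ i, |v i|) ^ 2 ≤ (d ⬝ᵥ d) * (v ⬝ᵥ v) := by
    have abs_eq (i : ι) : |v i| = |d i| * |v i| := by
      rw [← abs_mul, d_mul_v, abs_mul, he, one_mul, abs_abs]
    calc (∑ i, |v i|) ^ 2 = (∑ i, |d i| * |v i|) ^ 2 := by simp only [← abs_eq]
      _ ≤ (∑ i, |d i| ^ 2) * ∑ i, |v i| ^ 2 := Finset.sum_mul_sq_le_sq_mul_sq _ _ _
      _ = (d ⬝ᵥ d) * (v ⬝ᵥ v) := by simp only [dotProduct, sq, abs_mul_abs_self]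
  rcases le_total ((∑ i, |v i|) * (d ⬝ᵥ v)) ((v ⬝ᵥ v) * ∑ i, d i * SignType.sign (v i))
    with hle | hge
  · exact ⟨d, abs_le_one, eq_zero, hdv, hdd, hle⟩
  · exact ⟨-d, by simpa using abs_le_one, by simpa using eq_zero, by simpa using hdv,
      by simpa using hdd, by simpa using hge⟩

lemma eventually_abs_sub_mul {x y : ℝ} (hxy : x = 0 → y = 0) :
    ∀ᶠ ε : ℝ in 𝓝 0, |x - ε * y| = |x| - ε * (y * SignType.sign x) := by
  have htendsto : Tendsto (fun ε : ℝ => x - ε * y) (𝓝 0) (𝓝 x) :=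
    Continuous.tendsto' (by fun_prop) 0 x (by simp)
  rcases lt_trichotomy x 0 with hx | hx | hx
  · filter_upwards [htendsto.eventually_lt_const hx] with ε hε
    rw [abs_of_neg hε, abs_of_neg hx, sign_neg hx, SignType.coe_neg_one]
    ring
  · simp [hx, hxy hx]
  · filter_upwards [htendsto.eventually_const_lt hx] with ε hε
    rw [abs_of_pos hε, abs_of_pos hx, sign_pos hx, SignType.coe_one, mul_one]

lemma eventually_sum_abs_sub_smul {v d : ι → ℝ} (hvd : ∀ i, v i = 0 → d i = 0) :
    ∀ᶠ ε : ℝ in 𝓝 0,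
      ∑ i, |(v - ε • d) i| = ∑ i, |v i| - ε * ∑ i, d i * SignType.sign (v i) := by
  filter_upwards [eventually_all.2 fun i => eventually_abs_sub_mul (hvd i)] with ε hε
  simp only [Pi.sub_apply, Pi.smul_apply, smul_eq_mul, hε, Finset.sum_sub_distrib,
    Finset.mul_sum]

lemma gram_sub_smul {v : ι → ℝ} (hv : v ⬝ᵥ v = 1) (d : ι → ℝ) (ε : ℝ) :
    (v - ε • d) ⬝ᵥ (v - ε • d) - ((v - ε • d) ⬝ᵥ v) ^ 2 = ε ^ 2 * (d ⬝ᵥ d - (d ⬝ᵥ v) ^ 2) := by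
  simp only [sub_dotProduct, dotProduct_sub, smul_dotProduct, dotProduct_smul, smul_eq_mul, hv,
    dotProduct_comm v d]
  ring

lemma IsDescentDirection.eventually_sub_smul {v d : ι → ℝ} (hd : IsDescentDirection v d)
    (hv : v ⬝ᵥ v = 1) :
    ∀ᶠ ε in 𝓝[>] (0 : ℝ), (v - ε • d) ⬝ᵥ (v - ε • d) < 4 ∧
      ∑ i, |(v - ε • d) i| ≤ (∑ i, |v i|) * ((v - ε • d) ⬝ᵥ v) ∧
      ε ^ 2 * ((∑ i, |v i|) ^ 2 - 1) ≤
        (v - ε • d) ⬝ᵥ (v - ε • d) - ((v - ε • d) ⬝ᵥ v) ^ 2 := by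
  have hnorm : Tendsto (fun ε : ℝ => (v - ε • d) ⬝ᵥ (v - ε • d)) (𝓝 0) (𝓝 1) :=
    Continuous.tendsto' (by fun_prop) 0 1 (by simp [hv])
  filter_upwards [self_mem_nhdsWithin,
    (hnorm.eventually_lt_const (by norm_num : (1 : ℝ) < 4)).filter_mono nhdsWithin_le_nhds,
    (eventually_sum_abs_sub_smul hd.eq_zero_of_eq_zero).filter_mono nhdsWithin_le_nhds]
    with ε (hε : 0 < ε) hlt hsum
  have hdv := hd.dotProduct_sq_le
  have hdd := hd.sum_abs_sq_le
  have hfirst := hd.sum_abs_mul_le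
  rw [hv] at hdv hdd hfirst
  refine ⟨hlt, ?_, ?_⟩
  · rw [hsum, sub_dotProduct, smul_dotProduct, hv, smul_eq_mul]
    linarith [mul_le_mul_of_nonneg_left hfirst hε.le]
  · rw [gram_sub_smul hv]
    gcongr
    linarith

end DescentDirection

lemma eventually_exists_unit_sum_abs_lt {ι : Type*} [Fintype ι] {v : ι → ℝ} (hv : v ⬝ᵥ v = 1)
    (hv₁ : 1 < ∑ i, |v i|) :
    ∀ᶠ ε in 𝓝[>] (0 : ℝ), ∃ (u : ι → ℝ) (r : ℝ), u ⬝ᵥ u = 1 ∧ (∀ i, |v i - r * u i| ≤ ε) ∧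
      ∑ i, |u i| < ∑ i, |v i| ∧ ε ^ 2 * ((∑ i, |v i|) ^ 2 - 1) / 4 ≤ 1 - (u ⬝ᵥ v) ^ 2 := by
  obtain ⟨d, hd⟩ := exists_isDescentDirection v
  filter_upwards [self_mem_nhdsWithin, hd.eventually_sub_smul hv]
    with ε (hε : 0 < ε) ⟨hlt, hsum, hgram⟩
  set w : ι → ℝ := v - ε • d with hw
  set K := ∑ i, |v i|
  have hgap : 0 < ε ^ 2 * (K ^ 2 - 1) := mul_pos (by positivity) (by nlinarith)
  have hww : 0 < w ⬝ᵥ w := by nlinarith [sq_nonneg (w ⬝ᵥ v)]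
  set r := √(w ⬝ᵥ w)
  have hr : 0 < r := Real.sqrt_pos.2 hww
  have hr2 : r ^ 2 = w ⬝ᵥ w := Real.sq_sqrt hww.le
  refine ⟨r⁻¹ • w, r, ?_, fun i => ?_, ?_, ?_⟩
  · rw [smul_dotProduct, dotProduct_smul, smul_eq_mul, smul_eq_mul, ← hr2]
    field_simp
  · rw [Pi.smul_apply, smul_eq_mul, mul_inv_cancel_left₀ hr.ne']
    simpa [hw, abs_mul, abs_of_pos hε] using mul_le_of_le_one_right hε.le (hd.abs_le_one i)
  · have hlt_norm : w ⬝ᵥ v < r := Real.lt_sqrt_of_sq_lt (by linarith)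
    calc ∑ i, |(r⁻¹ • w) i| = r⁻¹ * ∑ i, |w i| := by
          simp [abs_mul, abs_of_pos hr, Finset.mul_sum]
      _ ≤ r⁻¹ * (K * (w ⬝ᵥ v)) := by gcongr
      _ < r⁻¹ * (K * r) := by gcongr
      _ = K := by field_simp
  · calc ε ^ 2 * (K ^ 2 - 1) / 4 ≤ ε ^ 2 * (K ^ 2 - 1) / (w ⬝ᵥ w) := by gcongr
      _ ≤ (w ⬝ᵥ w - (w ⬝ᵥ v) ^ 2) / (w ⬝ᵥ w) := by gcongr
      _ = 1 - ((r⁻¹ • w) ⬝ᵥ v) ^ 2 := by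
        rw [smul_dotProduct, smul_eq_mul, ← hr2]
        field_simp

section RankOne

variable {ι₁ ι₂ : Type*} [Fintype ι₁] [Fintype ι₂]

lemma eventually_exists_rankOne_perturbation {v : ι₁ → ℝ} (hv : v ⬝ᵥ v = 1)
    (hv₁ : 1 < ∑ i, |v i|) {a : ι₂ → ℝ} {B : ℝ} (hB : 0 < B) (ha : ∀ j, |a j| ≤ B) :
    ∀ᶠ δ in 𝓝[>] (0 : ℝ), ∃ (A' : Matrix ι₁ ι₂ ℝ) (u : ι₁ → ℝ),
      (∀ i j, |vecMulVec v a i j - A' i j| ≤ δ) ∧ vecNorm 2 u = 1 ∧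
      opNorm ⊤ 2 (vecMulVec u u) < opNorm ⊤ 2 (vecMulVec v v) ∧ vecMulVec u u * A' = A' ∧
      (δ / (2 * B)) ^ 2 * ((∑ i, |v i|) ^ 2 - 1) * (a ⬝ᵥ a) ≤
        frobSq (vecMulVec v a - vecMulVec u u * vecMulVec v a) := by
  have hscale : Tendsto (fun δ : ℝ => δ / B) (𝓝[>] 0) (𝓝[>] 0) := by
    refine tendsto_nhdsWithin_iff.2 ⟨?_, ?_⟩
    · exact (Continuous.tendsto' (by fun_prop) 0 0 (zero_div B)).mono_left nhdsWithin_le_nhds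
    · filter_upwards [self_mem_nhdsWithin] with δ hδ using div_pos hδ hB
  filter_upwards [hscale.eventually (eventually_exists_unit_sum_abs_lt hv hv₁)]
    with δ ⟨u, r, hu, hclose, hlt, hfar⟩
  have hu' : vecNorm 2 u = 1 := (vecNorm_two_eq_one_iff u).2 hu
  refine ⟨vecMulVec (r • u) a, u, fun i j => ?_, hu', ?_, ?_, ?_⟩
  · calc |vecMulVec v a i j - vecMulVec (r • u) a i j| = |v i - r * u i| * |a j| := by
          rw [vecMulVec_apply, vecMulVec_apply, ← sub_mul, abs_mul, Pi.smul_apply, smul_eq_mul]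
      _ ≤ δ / B * B := mul_le_mul (hclose i) (ha j) (abs_nonneg _)
          ((abs_nonneg _).trans (hclose i))
      _ = δ := div_mul_cancel₀ δ hB.ne'
  · rwa [opNorm_top_two_vecMulVec, opNorm_top_two_vecMulVec, hu', (vecNorm_two_eq_one_iff v).2 hv,
      mul_one, mul_one]
  · rw [vecMulVec_mul_vecMulVec, dotProduct_smul, hu, smul_eq_mul, mul_one, vecMulVec_smul,
      smul_vecMulVec]
  · rw [frobSq_vecMulVec_sub_proj hu, hv]
    have haa : 0 ≤ a ⬝ᵥ a := Finset.sum_nonneg fun j _ => mul_self_nonneg (a j)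
    calc (δ / (2 * B)) ^ 2 * ((∑ i, |v i|) ^ 2 - 1) * (a ⬝ᵥ a)
        = (δ / B) ^ 2 * ((∑ i, |v i|) ^ 2 - 1) / 4 * (a ⬝ᵥ a) := by ring
      _ ≤ (1 - (u ⬝ᵥ v) ^ 2) * (a ⬝ᵥ a) := by gcongr

lemma card_mul_sq_le_dotProduct_self {a : ι₂ → ℝ} {b : ℝ} (hb : 0 ≤ b) (ha : ∀ j, b ≤ |a j|) :
    Fintype.card ι₂ * b ^ 2 ≤ a ⬝ᵥ a := by
  rw [← nsmul_eq_mul, ← Finset.card_univ]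
  refine Finset.card_nsmul_le_sum _ _ _ fun j _ => ?_
  rw [← abs_mul_abs_self, ← sq]
  exact pow_le_pow_left₀ hb (ha j) 2

end RankOne

lemma one_sub_inv_sq_mul_sq_le {κ₀ κ K : ℝ} (hκ₀ : 0 < κ₀) (hκ : κ₀ ≤ κ) (hK : κ ≤ K) :
    (1 - (κ₀ ^ 2)⁻¹) * κ ^ 2 ≤ K ^ 2 - 1 := by
  have hratio : 1 ≤ (κ₀ ^ 2)⁻¹ * κ ^ 2 := by
    rw [inv_mul_eq_div, one_le_div (by positivity)]
    gcongr
  have hsq : κ ^ 2 ≤ K ^ 2 := pow_le_pow_left₀ (by linarith) hK 2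
  linarith

theorem additive_error_lower_bound_general {b B κ₀ : ℝ} (hb : 0 < b) (hB : 0 < B) (hκ₀ : 1 < κ₀) :
    ∃ c : ℝ, 0 < c ∧
      ∀ (ι₁ ι₂ : Type*) [Fintype ι₁] [Fintype ι₂] (A : Matrix ι₁ ι₂ ℝ) (v : ι₁ → ℝ) (κ : ℝ),
        (∀ j, b ≤ vecNorm 2 (fun i => A i j) ∧ vecNorm 2 (fun i => A i j) ≤ B) →
        vecNorm 2 v = 1 → κ₀ ≤ κ → κ ≤ ∑ i, |v i| →
        vecMulVec v v * A = A →
        ∃ δ₀ : ℝ, 0 < δ₀ ∧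
          ∀ δ : ℝ, 0 < δ → δ ≤ δ₀ →
            ∃ (A' : Matrix ι₁ ι₂ ℝ) (u : ι₁ → ℝ),
              (∀ i j, |A i j - A' i j| ≤ δ) ∧
              vecNorm 2 u = 1 ∧
              opNorm ⊤ 2 (vecMulVec u u) < opNorm ⊤ 2 (vecMulVec v v) ∧
              vecMulVec u u * A' = A' ∧
              c * δ * κ * √(Fintype.card ι₂) ≤ √(frobSq (A - vecMulVec u u * A)) := by
  have hgap : 0 < 1 - (κ₀ ^ 2)⁻¹ :=
    sub_pos.2 (inv_lt_one_of_one_lt₀ (one_lt_pow₀ hκ₀ two_ne_zero))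
  refine ⟨b / (2 * B) * √(1 - (κ₀ ^ 2)⁻¹), by positivity, ?_⟩
  intro ι₁ ι₂ _ _ A v κ hcol hv hκ hκv hA
  obtain ⟨a, rfl⟩ : ∃ a, A = vecMulVec v a := ⟨v ᵥ* A, by rw [← vecMulVec_mul, hA]⟩
  have vecNorm_col (j : ι₂) : vecNorm 2 (fun i => vecMulVec v a i j) = |a j| := by
    rw [← mul_one |a j|, ← hv, ← vecNorm_two_smul]
    exact congrArg _ (funext fun i => mul_comm (v i) (a j))
  simp only [vecNorm_col] at hcol
  obtain ⟨δ₀, hδ₀, hsub⟩ := mem_nhdsGT_iff_exists_Ioc_subset.1 <|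
    eventually_exists_rankOne_perturbation ((vecNorm_two_eq_one_iff v).1 hv)
      (hκ₀.trans_le (hκ.trans hκv)) hB fun j => (hcol j).2
  refine ⟨δ₀, hδ₀, fun δ hδ hδ_le => ?_⟩
  obtain ⟨A', u, hclose, hu, hlt, hfix, hfar⟩ := hsub ⟨hδ, hδ_le⟩
  refine ⟨A', u, hclose, hu, hlt, hfix, Real.le_sqrt_of_sq_le (le_trans ?_ hfar)⟩
  have hκK := one_sub_inv_sq_mul_sq_le (zero_lt_one.trans hκ₀) hκ hκv
  calc (b / (2 * B) * √(1 - (κ₀ ^ 2)⁻¹) * δ * κ * √(Fintype.card ι₂)) ^ 2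
      = (δ / (2 * B)) ^ 2 * ((1 - (κ₀ ^ 2)⁻¹) * κ ^ 2) * (Fintype.card ι₂ * b ^ 2) := by
        simp only [mul_pow, Real.sq_sqrt hgap.le, Real.sq_sqrt (Nat.cast_nonneg _)]
        ring
    _ ≤ (δ / (2 * B)) ^ 2 * ((∑ i, |v i|) ^ 2 - 1) * (a ⬝ᵥ a) := by
        have hK : 0 ≤ (∑ i, |v i|) ^ 2 - 1 := le_trans (by positivity) hκK
        gcongr
        exact card_mul_sq_le_dotProduct_self hb.le fun j => (hcol j).1

/-- There is a universal constant `c > 0` such that for any matrix `A` with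
column norms in `[1/10, 10]` whose columns all lie on the line spanned by a unit vector `v`
with `‖v‖₁ ≥ κ ≥ 2`, for all small enough `δ > 0` there are an entrywise `δ`-perturbation `A'`
of `A` and a rank-one orthogonal projection `Π' = ūūᵀ` that is strictly more robust than
`Π* = vvᵀ` in `∞→2` norm, fixes `A'`, yet `‖A − Π'A‖_F ≥ c δκ√m`. -/
theorem additive_error_lower_bound :
    ∃ c : ℝ, 0 < c ∧
      ∀ (n m : ℕ) (A : Matrix (Fin n) (Fin m) ℝ) (v : Fin n → ℝ) (κ : ℝ),
        (∀ j, 1 / 10 ≤ vecNorm 2 (fun i => A i j) ∧ vecNorm 2 (fun i => A i j) ≤ 10) →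
        vecNorm 2 v = 1 → 2 ≤ κ → κ ≤ ∑ i, |v i| →
        Matrix.vecMulVec v v * A = A →
        ∃ δ₀ : ℝ, 0 < δ₀ ∧
          ∀ δ : ℝ, 0 < δ → δ ≤ δ₀ →
            ∃ (A' : Matrix (Fin n) (Fin m) ℝ) (u : Fin n → ℝ),
              (∀ i j, |A i j - A' i j| ≤ δ) ∧
              vecNorm 2 u = 1 ∧
              opNorm ⊤ 2 (Matrix.vecMulVec u u) < opNorm ⊤ 2 (Matrix.vecMulVec v v) ∧
              Matrix.vecMulVec u u * A' = A' ∧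
              c * δ * κ * Real.sqrt m ≤
                Real.sqrt (frobSq (A - Matrix.vecMulVec u u * A)) := by
  obtain ⟨c, hc, h⟩ := additive_error_lower_bound_general
    (b := 1 / 10) (B := 10) (κ₀ := 2) (by norm_num) (by norm_num) (by norm_num)
  exact ⟨c, hc, fun n m => by simpa only [Fintype.card_fin] using h (Fin n) (Fin m)⟩
end

section
/- For every q ∈ [1,2) there exist n ≥ 2 and positive semidefinite matrices M, B ∈ ℝ^{n×n} such that ‖M + B‖_q < ‖M‖_q, where ‖·‖_q denotes the entrywise ℓ_q norm of the matrix. (One may take M = I − (1/n)𝟙𝟙ᵀ and B = (1/n)𝟙𝟙ᵀ for sufficiently large n, where 𝟙 is the all-ones vector.) Hence the entrywise ℓ_q matrix norm is not monotone for q ∈ [1,2). -/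
open scoped BigOperators ENNReal
open Matrix

/-!
Write `J` for the matrix with all entries `1 / n` and take `M = 1 - J`, `B = J`, two complementary
orthogonal projections with sum `1`. Passing from `1` to `1 - J` lowers each of the `n` diagonal
entries from `1` to `1 - 1 / n`, which costs the sum of `q`-th powers at most
`n (1 - (1 - 1 / n) ^ 2) ≤ 2`. It also turns `n (n - 1)` zeros into entries of absolute value
`1 / n`, which gains `n (n - 1) n ^ (-q)`. The gain is of order `n ^ (2 - q)`, so it exceeds `2`
for large `n`.
-/

open Filter

open scoped MatrixOrder ComplexOrder in
theorem posSemidef_of_isStarProjection {𝕜 ι : Type*} [RCLike 𝕜] [Fintype ι] {P : Matrix ι ι 𝕜}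
    (hP : IsStarProjection P) : P.PosSemidef :=
  hP.nonneg.posSemidef

/-- The averaging matrix `(1 / n) 𝟙𝟙ᵀ` with `n` the size of the index type: it replaces every
coordinate of a vector by the mean of its coordinates. -/
def averagingMatrix (R ι : Type*) [DivisionSemiring R] [Fintype ι] : Matrix ι ι R :=
  of fun _ _ => (Fintype.card ι : R)⁻¹

theorem isStarProjection_averagingMatrix (R ι : Type*) [DivisionSemiring R] [StarRing R]
    [Fintype ι] : IsStarProjection (averagingMatrix R ι) where
  isIdempotentElem := by
    ext i j
    simpa [averagingMatrix, Matrix.mul_apply, mul_assoc] using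
      inv_mul_mul_self (Fintype.card ι : R)⁻¹
  isSelfAdjoint := by
    ext i j
    simp [averagingMatrix]

theorem sum_sum_ite_eq_diag {R ι : Type*} [Ring R] [Fintype ι] [DecidableEq ι] (a b : R) :
    ∑ i : ι, ∑ j : ι, (if i = j then a else b) =
      Fintype.card ι * (a + (Fintype.card ι - 1) * b) := by
  have split_entry (i j : ι) : (if i = j then a else b) = (if i = j then a - b else 0) + b := by
    split_ifs <;> simp
  simp only [split_entry, Finset.sum_add_distrib, Finset.sum_ite_eq, Finset.mem_univ, if_true,
    Finset.sum_const, Finset.card_univ, nsmul_eq_mul]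
  noncomm_ring

section EntrywiseSums

variable (ι : Type*) [Fintype ι] [DecidableEq ι]

theorem sum_abs_one_rpow {q : ℝ} (hq : q ≠ 0) :
    ∑ i, ∑ j, |(1 : Matrix ι ι ℝ) i j| ^ q = Fintype.card ι := by
  have abs_entry (i j : ι) : |(1 : Matrix ι ι ℝ) i j| ^ q = if i = j then 1 else 0 := by
    rw [Matrix.one_apply]
    split_ifs <;> simp [hq]
  simp [abs_entry]

theorem sum_abs_one_sub_averagingMatrix_rpow (q : ℝ) :
    ∑ i, ∑ j, |(1 - averagingMatrix ℝ ι) i j| ^ q =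
      Fintype.card ι * ((1 - (Fintype.card ι : ℝ)⁻¹) ^ q +
        (Fintype.card ι - 1) * (Fintype.card ι : ℝ)⁻¹ ^ q) := by
  have abs_entry (i j : ι) : |(1 - averagingMatrix ℝ ι) i j| ^ q =
      if i = j then (1 - (Fintype.card ι : ℝ)⁻¹) ^ q else (Fintype.card ι : ℝ)⁻¹ ^ q := by
    have diag_nonneg : 0 ≤ 1 - (Fintype.card ι : ℝ)⁻¹ := sub_nonneg.2 (Nat.cast_inv_le_one _)
    rw [Matrix.sub_apply, Matrix.one_apply, averagingMatrix, of_apply]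
    split_ifs
    · rw [abs_of_nonneg diag_nonneg]
    · simp
  simp only [abs_entry, sum_sum_ite_eq_diag]

end EntrywiseSums

theorem eventually_one_lt_one_sub_inv_rpow_add {q : ℝ} (hq : q < 2) :
    ∀ᶠ x : ℝ in atTop, 1 < (1 - x⁻¹) ^ q + (x - 1) * x⁻¹ ^ q := by
  filter_upwards [eventually_ge_atTop 2,
    (tendsto_rpow_atTop (sub_pos.2 hq)).eventually_ge_atTop 4] with x hx2 hx4
  have hx0 : 0 < x := by linarith
  have inv_pos : 0 < x⁻¹ := inv_pos.2 hx0
  have inv_lt_one : x⁻¹ < 1 := inv_lt_one_of_one_lt₀ (by linarith)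
  have diag_ge : (1 - x⁻¹) ^ 2 ≤ (1 - x⁻¹) ^ q := by
    rw [← Real.rpow_two]
    exact Real.rpow_le_rpow_of_exponent_ge (by linarith) (by linarith) hq.le
  have inv_rpow_eq : x⁻¹ ^ q = x ^ (2 - q) * x⁻¹ ^ 2 := by
    rw [Real.inv_rpow hx0.le, Real.rpow_sub hx0, Real.rpow_two]
    field_simp
  have offDiag_ge : 2 * x⁻¹ ≤ (x - 1) * x⁻¹ ^ q := calc
    2 * x⁻¹ = x / 2 * (4 * x⁻¹ ^ 2) := by field_simp; norm_num
    _ ≤ (x - 1) * (x ^ (2 - q) * x⁻¹ ^ 2) := by gcongr <;> linarith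
    _ = (x - 1) * x⁻¹ ^ q := by rw [inv_rpow_eq]
  calc
    1 < (1 - x⁻¹) ^ 2 + 2 * x⁻¹ := by linarith [sq_pos_of_pos inv_pos]
    _ ≤ (1 - x⁻¹) ^ q + (x - 1) * x⁻¹ ^ q := add_le_add diag_ge offDiag_ge

theorem eventually_sum_abs_one_rpow_lt_sum_abs_one_sub_averagingMatrix_rpow {q : ℝ} (hq0 : q ≠ 0)
    (hq2 : q < 2) :
    ∀ᶠ n : ℕ in atTop, ∑ i, ∑ j, |(1 : Matrix (Fin n) (Fin n) ℝ) i j| ^ q <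
      ∑ i, ∑ j, |(1 - averagingMatrix ℝ (Fin n)) i j| ^ q := by
  filter_upwards [eventually_gt_atTop 0,
    tendsto_natCast_atTop_atTop.eventually (eventually_one_lt_one_sub_inv_rpow_add hq2)]
    with n hn row_sum_gt
  rw [sum_abs_one_rpow _ hq0, sum_abs_one_sub_averagingMatrix_rpow, Fintype.card_fin]
  exact lt_mul_of_one_lt_right (Nat.cast_pos.2 hn) row_sum_gt

theorem entrywise_lq_not_monotone_general {q : ℝ} (hq0 : 0 < q) (hq2 : q < 2) :
    ∀ᶠ n : ℕ in atTop,
      ∃ M B : Matrix (Fin n) (Fin n) ℝ, M.PosSemidef ∧ B.PosSemidef ∧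
        (∑ i, ∑ j, |(M + B) i j| ^ q) ^ (1 / q) < (∑ i, ∑ j, |M i j| ^ q) ^ (1 / q) := by
  filter_upwards [eventually_sum_abs_one_rpow_lt_sum_abs_one_sub_averagingMatrix_rpow hq0.ne' hq2]
    with n sum_lt
  have hJ := isStarProjection_averagingMatrix ℝ (Fin n)
  refine ⟨1 - averagingMatrix ℝ (Fin n), averagingMatrix ℝ (Fin n),
    posSemidef_of_isStarProjection hJ.one_sub, posSemidef_of_isStarProjection hJ, ?_⟩
  rw [sub_add_cancel]
  exact Real.rpow_lt_rpow (by positivity) sum_lt (one_div_pos.2 hq0)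

/-- For every `q ∈ [1,2)` there exist `n ≥ 2` and PSD matrices `M, B` with
`‖M + B‖_q < ‖M‖_q` in the entrywise `ℓ_q` matrix norm: the entrywise `ℓ_q` norm is not
monotone for `q ∈ [1,2)`. -/
theorem entrywise_lq_not_monotone (q : ℝ) (hq1 : 1 ≤ q) (hq2 : q < 2) :
    ∃ n : ℕ, 2 ≤ n ∧
      ∃ M B : Matrix (Fin n) (Fin n) ℝ, M.PosSemidef ∧ B.PosSemidef ∧
        (∑ i, ∑ j, |(M + B) i j| ^ q) ^ (1 / q) < (∑ i, ∑ j, |M i j| ^ q) ^ (1 / q) :=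
  ((eventually_ge_atTop 2).and
    (entrywise_lq_not_monotone_general (zero_lt_one.trans_le hq1) hq2)).exists
end

section
/- Let Σ* ∈ ℝ^{n×n} be a positive semidefinite matrix of rank r all of whose nonzero eigenvalues are at most θ_max, and let Π* be the orthogonal projection matrix onto the range of Σ* (so Π*Σ*Π* = Σ*). Let Π ∈ ℝ^{n×n} be an orthogonal projection matrix of rank r with ‖Π* − Π‖_F² ≤ ε. Then for every symmetric matrix Σ ∈ ℝ^{n×n}: ‖Σ* − ΠΣΠ‖_F² ≤ 8·θ_max²·ε + 2·‖ΠΣ*Π − ΠΣΠ‖_F². -/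
open scoped BigOperators ENNReal
open Matrix

/-!
Since `P` is an orthogonal projection, `Sstar - P * Sig * P` splits orthogonally for the Frobenius
inner product into `P * (Sstar - Sig) * P`, `P * Sstar * (1 - P)` and `(1 - P) * Sstar`. The second
piece is at most as large as `Sstar * (1 - P)`, the transpose of the third, and the third equals
`(Pstar - P) * Sstar` because `Pstar` fixes the range of `Sstar`; its squared Frobenius norm is
therefore at most `θmax ^ 2 * frobSq (Pstar - P)`. The Pythagorean identity gives the constants `2`
and `1` where the triangle inequality would give `8` and `2`.
-/

section Frobenius

variable {k m n : Type*} [Fintype k] [Fintype m] [Fintype n]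

theorem frobSq_nonneg (A : Matrix m n ℝ) : 0 ≤ frobSq A :=
  Finset.sum_nonneg fun _ _ ↦ Finset.sum_nonneg fun _ _ ↦ sq_nonneg _

theorem frobSq_transpose (A : Matrix m n ℝ) : frobSq Aᵀ = frobSq A :=
  Finset.sum_comm

theorem frobSq_eq_trace (A : Matrix m n ℝ) : frobSq A = (A * Aᵀ).trace := by
  simp [frobSq, trace, mul_apply, sq]

theorem frobSq_mul_le [DecidableEq n] {c : ℝ} {B : Matrix n k ℝ}
    (hB : (c • (1 : Matrix n n ℝ) - B * Bᵀ).PosSemidef) (A : Matrix m n ℝ) :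
    frobSq (A * B) ≤ c * frobSq A := by
  have htrace : 0 ≤ (A * (c • (1 : Matrix n n ℝ) - B * Bᵀ) * Aᵀ).trace :=
    (hB.mul_mul_conjTranspose_same A).trace_nonneg
  have hexpand : (A * (c • (1 : Matrix n n ℝ) - B * Bᵀ) * Aᵀ).trace =
      c * frobSq A - frobSq (A * B) := by
    simp [frobSq_eq_trace, Matrix.mul_sub, Matrix.sub_mul, Matrix.mul_assoc]
  linarith

end Frobenius

section Projection

variable {m n : Type*} [Fintype m] [Fintype n]

theorem transpose_eq_of_isStarProjection {P : Matrix n n ℝ} (hP : IsStarProjection P) : Pᵀ = P :=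
  hP.isSelfAdjoint

theorem mul_eq_right_iff_range_le {R : Type*} [CommSemiring R] {Q : Matrix m m R}
    (hQ : IsIdempotentElem Q) (A : Matrix m n R) :
    Q * A = A ↔ LinearMap.range A.mulVecLin ≤ LinearMap.range Q.mulVecLin := by
  classical
  have hQlin : IsIdempotentElem Q.mulVecLin := by
    rw [IsIdempotentElem, Module.End.mul_eq_comp, ← mulVecLin_mul, hQ.eq]
  rw [← LinearMap.IsIdempotentElem.comp_eq_right_iff hQlin, ← mulVecLin_mul, ← toLin'_apply',
    ← toLin'_apply', toLin'.injective.eq_iff]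

theorem frobSq_mul_of_isStarProjection {P : Matrix n n ℝ} (hP : IsStarProjection P)
    (A : Matrix m n ℝ) : frobSq (A * P) = (A * P * Aᵀ).trace := by
  rw [frobSq_eq_trace, transpose_mul, transpose_eq_of_isStarProjection hP, ← Matrix.mul_assoc,
    Matrix.mul_assoc A P P, hP.isIdempotentElem.eq]

theorem frobSq_mul_add_frobSq_mul_one_sub [DecidableEq n] {P : Matrix n n ℝ}
    (hP : IsStarProjection P) (A : Matrix m n ℝ) :
    frobSq (A * P) + frobSq (A * (1 - P)) = frobSq A := by
  rw [frobSq_mul_of_isStarProjection hP, frobSq_mul_of_isStarProjection hP.one_sub,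
    ← trace_add, ← Matrix.add_mul, ← Matrix.mul_add, add_sub_cancel, Matrix.mul_one,
    frobSq_eq_trace]

theorem frobSq_mul_add_frobSq_one_sub_mul [DecidableEq m] {P : Matrix m m ℝ}
    (hP : IsStarProjection P) (A : Matrix m n ℝ) :
    frobSq (P * A) + frobSq ((1 - P) * A) = frobSq A := by
  have htranspose := frobSq_mul_add_frobSq_mul_one_sub hP Aᵀ
  rwa [← frobSq_transpose (Aᵀ * P), ← frobSq_transpose (Aᵀ * (1 - P)), transpose_mul,
    transpose_mul, transpose_transpose, transpose_eq_of_isStarProjection hP,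
    transpose_eq_of_isStarProjection hP.one_sub, frobSq_transpose] at htranspose

theorem frobSq_mul_le_of_isStarProjection {P : Matrix m m ℝ} (hP : IsStarProjection P)
    (A : Matrix m n ℝ) : frobSq (P * A) ≤ frobSq A := by
  classical
  linarith [frobSq_mul_add_frobSq_one_sub_mul hP A, frobSq_nonneg ((1 - P) * A)]

theorem frobSq_sub_mul_mul_eq_add [DecidableEq m] [DecidableEq n] {P : Matrix m m ℝ}
    {R : Matrix n n ℝ} (hP : IsStarProjection P) (hR : IsStarProjection R)
    (A X : Matrix m n ℝ) :
    frobSq (A - P * X * R) =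
      frobSq (P * A * R - P * X * R) + frobSq (P * A * (1 - R)) + frobSq ((1 - P) * A) := by
  have hleft : P * (A - P * X * R) = P * A - P * X * R := by
    simp only [Matrix.mul_sub, ← Matrix.mul_assoc, hP.isIdempotentElem.eq]
  have hright : (P * A - P * X * R) * R = P * A * R - P * X * R := by
    rw [Matrix.sub_mul, Matrix.mul_assoc (P * X), hR.isIdempotentElem.eq]
  have hleft_compl : (1 - P) * (A - P * X * R) = (1 - P) * A := by
    simp only [Matrix.mul_sub, ← Matrix.mul_assoc, hP.one_sub_mul_self, Matrix.zero_mul, sub_zero]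
  have hright_compl : (P * A - P * X * R) * (1 - R) = P * A * (1 - R) := by
    rw [Matrix.sub_mul, Matrix.mul_assoc (P * X), hR.mul_one_sub_self, Matrix.mul_zero, sub_zero]
  rw [← frobSq_mul_add_frobSq_one_sub_mul hP (A - P * X * R), hleft, hleft_compl,
    ← frobSq_mul_add_frobSq_mul_one_sub hR (P * A - P * X * R), hright, hright_compl]

end Projection

section Symmetric

variable {n : Type*} [Fintype n] [DecidableEq n]

theorem frobSq_mul_mul_one_sub_le {P S : Matrix n n ℝ} (hP : IsStarProjection P) (hS : S.IsSymm) :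
    frobSq (P * S * (1 - P)) ≤ frobSq ((1 - P) * S) :=
  calc frobSq (P * S * (1 - P))
    _ = frobSq (P * (S * (1 - P))) := by rw [Matrix.mul_assoc]
    _ ≤ frobSq (S * (1 - P)) := frobSq_mul_le_of_isStarProjection hP _
    _ = frobSq ((1 - P) * S) := by
      rw [← frobSq_transpose, transpose_mul, hS.eq, transpose_eq_of_isStarProjection hP.one_sub]

open scoped MatrixOrder in
theorem posSemidef_sq_smul_one_sub_mul_self {θ : ℝ} {S : Matrix n n ℝ}
    (hle : (θ • (1 : Matrix n n ℝ) - S).PosSemidef)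
    (hge : (θ • (1 : Matrix n n ℝ) + S).PosSemidef) :
    (θ ^ 2 • (1 : Matrix n n ℝ) - S * S).PosSemidef := by
  have hcomm : Commute (θ • (1 : Matrix n n ℝ)) S := (Commute.one_left S).smul_left θ
  have hfactor : (θ • (1 : Matrix n n ℝ) + S) * (θ • 1 - S) = θ ^ 2 • 1 - S * S := by
    rw [← hcomm.mul_self_sub_mul_self_eq, smul_mul_smul_comm, Matrix.one_mul, sq]
  have hcomm_add_sub : Commute (θ • (1 : Matrix n n ℝ) + S) (θ • 1 - S) :=
    ((Commute.refl _).sub_right hcomm).add_left (hcomm.symm.sub_right (Commute.refl S))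
  exact hfactor ▸ (hcomm_add_sub.mul_nonneg hge.nonneg hle.nonneg).posSemidef

theorem recover_sigma_bound_general {θ ε : ℝ} {S Q P : Matrix n n ℝ}
    (hle : (θ • (1 : Matrix n n ℝ) - S).PosSemidef)
    (hge : (θ • (1 : Matrix n n ℝ) + S).PosSemidef) (hQ : IsIdempotentElem Q)
    (hrange : LinearMap.range S.mulVecLin ≤ LinearMap.range Q.mulVecLin)
    (hP : IsStarProjection P) (hclose : frobSq (Q - P) ≤ ε) (X : Matrix n n ℝ) :
    frobSq (S - P * X * P) ≤ 2 * θ ^ 2 * ε + frobSq (P * S * P - P * X * P) := by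
  have hS : S.IsSymm := by
    simpa using (isSymm_one.smul θ).sub (isHermitian_iff_isSymm.mp hle.isHermitian)
  have hQS : Q * S = S := (mul_eq_right_iff_range_le hQ S).mpr hrange
  have hcompl : (1 - P) * S = (Q - P) * S := by
    rw [Matrix.sub_mul, Matrix.sub_mul, hQS, Matrix.one_mul]
  have hoperator : (θ ^ 2 • (1 : Matrix n n ℝ) - S * Sᵀ).PosSemidef := by
    simpa only [hS.eq] using posSemidef_sq_smul_one_sub_mul_self hle hge
  have hthird : frobSq ((1 - P) * S) ≤ θ ^ 2 * ε :=
    calc frobSq ((1 - P) * S)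
      _ = frobSq ((Q - P) * S) := by rw [hcompl]
      _ ≤ θ ^ 2 * frobSq (Q - P) := frobSq_mul_le hoperator _
      _ ≤ θ ^ 2 * ε := by gcongr
  have hsecond : frobSq (P * S * (1 - P)) ≤ frobSq ((1 - P) * S) :=
    frobSq_mul_mul_one_sub_le hP hS
  rw [frobSq_sub_mul_mul_eq_add hP hP]
  linarith

end Symmetric

/-- Let `Σ* ⪰ 0` have rank `r` with all eigenvalues at most `θ_max`, let `Π*` be
the orthogonal projection onto its range, and let `Π` be a rank-`r` orthogonal projection with
`‖Π* − Π‖_F² ≤ ε`. Then for every symmetric `Σ`,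
`‖Σ* − ΠΣΠ‖_F² ≤ 8 θ_max² ε + 2 ‖ΠΣ*Π − ΠΣΠ‖_F²`. -/
theorem recover_sigma_bound {n : ℕ} (r : ℕ) (θmax : ℝ)
    (Sstar : Matrix (Fin n) (Fin n) ℝ) (hS : Sstar.PosSemidef) (hSrank : Sstar.rank = r)
    (hSeig : (θmax • (1 : Matrix (Fin n) (Fin n) ℝ) - Sstar).PosSemidef)
    (Pstar : Matrix (Fin n) (Fin n) ℝ) (hPstarSym : Pstar.IsSymm)
    (hPstarProj : Pstar * Pstar = Pstar)
    (hPstarRange : LinearMap.range Pstar.mulVecLin = LinearMap.range Sstar.mulVecLin)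
    (P : Matrix (Fin n) (Fin n) ℝ) (hPSym : P.IsSymm) (hPProj : P * P = P)
    (hPrank : P.rank = r)
    (ε : ℝ) (hclose : frobSq (Pstar - P) ≤ ε)
    (Sig : Matrix (Fin n) (Fin n) ℝ) (hSig : Sig.IsSymm) :
    frobSq (Sstar - P * Sig * P) ≤
      8 * θmax ^ 2 * ε + 2 * frobSq (P * Sstar * P - P * Sig * P) := by
  have hge : (θmax • (1 : Matrix (Fin n) (Fin n) ℝ) + Sstar).PosSemidef := by
    simpa using (hSeig.add hS).add hS
  have hP : IsStarProjection P := ⟨hPProj, isHermitian_iff_isSymm.mpr hPSym⟩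
  have hε : 0 ≤ ε := (frobSq_nonneg _).trans hclose
  have hsharp := recover_sigma_bound_general hSeig hge hPstarProj hPstarRange.ge hP hclose Sig
  linarith [mul_nonneg (sq_nonneg θmax) hε, frobSq_nonneg (P * Sstar * P - P * Sig * P)]
end

section
/- Let q ∈ [2,∞] with dual exponent q*, let δ ≥ 0, κ₁, κ₂ ≥ 1 and κ := κ₁ + κ₂. Let A, Ã ∈ ℝ^{n×m} satisfy ‖A_j − Ã_j‖_q ≤ δ for every column j ∈ [m]. Let v, u ∈ ℝⁿ be unit vectors with ‖v‖_{q*} ≤ κ₁ and ‖u‖_{q*} ≤ κ₂, and set Π₁ := vvᵀ, Π₂ := uuᵀ. Suppose ‖A − Π₁A‖ ≤ ε₁‖A‖ and ‖Ã − Π₂Ã‖ ≤ ε₂‖A‖ (spectral norms), and let ε := ε₁ + ε₂ ∈ (0,1]. Then ‖A − Π₂A‖ ≤ 8(ε + √ε)·‖A‖ + 8κδ√m/√ε, and likewise ‖Ã − Π₁Ã‖ ≤ 8(ε + √ε)·‖A‖ + 8κδ√m/√ε. -/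
open scoped BigOperators ENNReal
open Matrix

open scoped InnerProductSpace

/-!
Let `P u` be the projection onto the orthogonal complement of a unit vector `u`, and put
`s := ‖P u v‖`, the sine of the angle between `u` and `v`. For `y = A x` and `z = Ã x` we have
`‖P u y‖ ≤ s |⟪v, y⟫| + ‖P v y‖`, so only `s |⟪v, y⟫|` has to be controlled. Replacing `y` by its
projection onto the line of `v` and `z` by its projection onto the line of `u` costs small residuals
and gives `⟪v, y⟫ ≈ ⟪u, v⟫ ⟪u, z⟫ ≈ (1 - s²) ⟪v, y⟫`. Hence `s² |⟪v, y⟫|` is small, and the square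
root in the bound comes from `(s |⟪v, y⟫|)² ≤ s² |⟪v, y⟫| ‖A‖ ‖x‖`. The perturbation enters only
through the functionals `⟪v, (A - Ã) x⟫` and `⟪u, (A - Ã) x⟫`, whose coordinates Hölder's inequality
bounds column by column.
-/

-- Since `a ≤ M`, the hypothesis gives `(s * a) ^ 2 ≤ ε * M ^ 2 + K * M`; now complete the square.
theorem mul_le_sqrt_mul_add_div_of_sq_mul_le {s a M K ε : ℝ} (ha : 0 ≤ a) (haM : a ≤ M)
    (hK : 0 ≤ K) (hε : 0 < ε) (h : s ^ 2 * a ≤ ε * M + K) :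
    s * a ≤ √ε * M + K / (2 * √ε) := by
  have hM : 0 ≤ M := ha.trans haM
  refine abs_le_of_sq_le_sq' ?_ (by positivity) |>.2
  calc (s * a) ^ 2 = s ^ 2 * a * a := by ring
    _ ≤ (ε * M + K) * M := by gcongr
    _ ≤ (ε * M + K) * M + (K / (2 * √ε)) ^ 2 := le_add_of_nonneg_right (sq_nonneg _)
    _ = (√ε * M + K / (2 * √ε)) ^ 2 := by
      have : √ε ≠ 0 := (Real.sqrt_pos.2 hε).ne'
      have : √ε * (K / (2 * √ε)) = K / 2 := by field_simp
      linear_combination (-M ^ 2) * Real.sq_sqrt hε.le - 2 * M * this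

section Line

variable {𝕜 F : Type*} [RCLike 𝕜] [NormedAddCommGroup F] [InnerProductSpace 𝕜 F] {u v : F}

theorem starProjection_orthogonal_unit_singleton (hu : ‖u‖ = 1) (y : F) :
    (𝕜 ∙ u)ᗮ.starProjection y = y - ⟪u, y⟫_𝕜 • u := by
  rw [Submodule.starProjection_orthogonal_val, Submodule.starProjection_unit_singleton 𝕜 hu]

theorem norm_starProjection_orthogonal_unit_sq (hu : ‖u‖ = 1) (hv : ‖v‖ = 1) :
    ‖(𝕜 ∙ u)ᗮ.starProjection v‖ ^ 2 = 1 - ‖⟪u, v⟫_𝕜‖ ^ 2 := by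
  have pythagoras := Submodule.norm_sq_eq_add_norm_sq_starProjection v (𝕜 ∙ u)
  rw [Submodule.starProjection_unit_singleton 𝕜 hu, norm_smul, hu, hv] at pythagoras
  linarith

theorem norm_starProjection_orthogonal_unit_comm (hu : ‖u‖ = 1) (hv : ‖v‖ = 1) :
    ‖(𝕜 ∙ u)ᗮ.starProjection v‖ = ‖(𝕜 ∙ v)ᗮ.starProjection u‖ := by
  rw [← sq_eq_sq₀ (norm_nonneg _) (norm_nonneg _), norm_starProjection_orthogonal_unit_sq hu hv,
    norm_starProjection_orthogonal_unit_sq hv hu, norm_inner_symm]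

theorem norm_starProjection_orthogonal_le_of_unit (hv : ‖v‖ = 1) (y : F) :
    ‖(𝕜 ∙ u)ᗮ.starProjection y‖ ≤
      ‖(𝕜 ∙ u)ᗮ.starProjection v‖ * ‖⟪v, y⟫_𝕜‖ + ‖(𝕜 ∙ v)ᗮ.starProjection y‖ := by
  have decomp : y = ⟪v, y⟫_𝕜 • v + (𝕜 ∙ v)ᗮ.starProjection y := by
    rw [starProjection_orthogonal_unit_singleton hv, add_sub_cancel]
  calc ‖(𝕜 ∙ u)ᗮ.starProjection y‖
      = ‖⟪v, y⟫_𝕜 • (𝕜 ∙ u)ᗮ.starProjection v +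
          (𝕜 ∙ u)ᗮ.starProjection ((𝕜 ∙ v)ᗮ.starProjection y)‖ := by
        rw [← map_smul, ← map_add, ← decomp]
    _ ≤ ‖⟪v, y⟫_𝕜 • (𝕜 ∙ u)ᗮ.starProjection v‖ + ‖(𝕜 ∙ v)ᗮ.starProjection y‖ :=
        norm_add_le_of_le le_rfl (Submodule.norm_starProjection_apply_le _ _)
    _ = _ := by rw [norm_smul, mul_comm]

theorem norm_inner_le_norm_inner_mul_add (hu : ‖u‖ = 1) (hv : ‖v‖ = 1) (y z : F) :
    ‖⟪v, y⟫_𝕜‖ ≤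
      ‖⟪u, v⟫_𝕜‖ * ‖⟪u, z⟫_𝕜‖ + ‖(𝕜 ∙ u)ᗮ.starProjection z‖ + ‖⟪v, y - z⟫_𝕜‖ := by
  have expand : ⟪v, y⟫_𝕜 =
      ⟪u, z⟫_𝕜 * ⟪v, u⟫_𝕜 + ⟪v, (𝕜 ∙ u)ᗮ.starProjection z⟫_𝕜 + ⟪v, y - z⟫_𝕜 := by
    rw [starProjection_orthogonal_unit_singleton hu, inner_sub_right, inner_sub_right,
      inner_smul_right]
    ring
  have residual : ‖⟪v, (𝕜 ∙ u)ᗮ.starProjection z⟫_𝕜‖ ≤ ‖(𝕜 ∙ u)ᗮ.starProjection z‖ := by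
    simpa [hv] using norm_inner_le_norm (𝕜 := 𝕜) v ((𝕜 ∙ u)ᗮ.starProjection z)
  calc ‖⟪v, y⟫_𝕜‖
      ≤ ‖⟪u, z⟫_𝕜 * ⟪v, u⟫_𝕜‖ + ‖⟪v, (𝕜 ∙ u)ᗮ.starProjection z⟫_𝕜‖ + ‖⟪v, y - z⟫_𝕜‖ := by
        conv_lhs => rw [expand]
        exact norm_add₃_le
    _ ≤ _ := by
        rw [norm_mul, mul_comm, norm_inner_symm v u]
        gcongr

theorem sq_norm_starProjection_orthogonal_mul_norm_inner_le (hu : ‖u‖ = 1) (hv : ‖v‖ = 1)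
    (y z : F) :
    ‖(𝕜 ∙ u)ᗮ.starProjection v‖ ^ 2 * ‖⟪v, y⟫_𝕜‖ ≤
      ‖(𝕜 ∙ v)ᗮ.starProjection y‖ + ‖(𝕜 ∙ u)ᗮ.starProjection z‖ +
        (‖⟪v, y - z⟫_𝕜‖ + ‖⟪u, y - z⟫_𝕜‖) := by
  have cos_le_one : ‖⟪u, v⟫_𝕜‖ ≤ 1 := by simpa [hu, hv] using norm_inner_le_norm (𝕜 := 𝕜) u v
  have hy := norm_inner_le_norm_inner_mul_add (𝕜 := 𝕜) hu hv y z
  have hz := norm_inner_le_norm_inner_mul_add (𝕜 := 𝕜) hv hu z y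
  rw [norm_inner_symm v u, ← neg_sub, inner_neg_right, norm_neg] at hz
  rw [norm_starProjection_orthogonal_unit_sq hu hv]
  set c := ‖⟪u, v⟫_𝕜‖
  set r := ‖(𝕜 ∙ v)ᗮ.starProjection y‖ + ‖⟪u, y - z⟫_𝕜‖
  have hcz : c * ‖⟪u, z⟫_𝕜‖ ≤ c ^ 2 * ‖⟪v, y⟫_𝕜‖ + r :=
    calc c * ‖⟪u, z⟫_𝕜‖ ≤ c * (c * ‖⟪v, y⟫_𝕜‖ + r) := by gcongr; linarith
      _ = c ^ 2 * ‖⟪v, y⟫_𝕜‖ + c * r := by ring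
      _ ≤ c ^ 2 * ‖⟪v, y⟫_𝕜‖ + r := by
        gcongr
        exact mul_le_of_le_one_left (by positivity) cos_le_one
  linarith

variable {y z : F} {M ε : ℝ}

theorem norm_starProjection_orthogonal_mul_norm_inner_le (hu : ‖u‖ = 1) (hv : ‖v‖ = 1)
    (hε : 0 < ε) (hy : ‖y‖ ≤ M)
    (h : ‖(𝕜 ∙ v)ᗮ.starProjection y‖ + ‖(𝕜 ∙ u)ᗮ.starProjection z‖ ≤ ε * M) :
    ‖(𝕜 ∙ u)ᗮ.starProjection v‖ * ‖⟪v, y⟫_𝕜‖ ≤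
      √ε * M + (‖⟪v, y - z⟫_𝕜‖ + ‖⟪u, y - z⟫_𝕜‖) / (2 * √ε) := by
  have haM : ‖⟪v, y⟫_𝕜‖ ≤ M := by
    simpa [hv] using (norm_inner_le_norm (𝕜 := 𝕜) v y).trans (by simpa [hv])
  refine mul_le_sqrt_mul_add_div_of_sq_mul_le (norm_nonneg _) haM (by positivity) hε ?_
  grw [sq_norm_starProjection_orthogonal_mul_norm_inner_le hu hv y z, h]

theorem norm_starProjection_orthogonal_le_left (hu : ‖u‖ = 1) (hv : ‖v‖ = 1) (hε : 0 < ε)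
    (hy : ‖y‖ ≤ M)
    (h : ‖(𝕜 ∙ v)ᗮ.starProjection y‖ + ‖(𝕜 ∙ u)ᗮ.starProjection z‖ ≤ ε * M) :
    ‖(𝕜 ∙ u)ᗮ.starProjection y‖ ≤
      (ε + √ε) * M + (‖⟪v, y - z⟫_𝕜‖ + ‖⟪u, y - z⟫_𝕜‖) / (2 * √ε) := by
  linarith [norm_starProjection_orthogonal_le_of_unit (𝕜 := 𝕜) (u := u) hv y,
    norm_starProjection_orthogonal_mul_norm_inner_le hu hv hε hy h,
    norm_nonneg ((𝕜 ∙ u)ᗮ.starProjection z)]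

theorem norm_starProjection_orthogonal_le_right (hu : ‖u‖ = 1) (hv : ‖v‖ = 1) (hε : 0 < ε)
    (hy : ‖y‖ ≤ M)
    (h : ‖(𝕜 ∙ v)ᗮ.starProjection y‖ + ‖(𝕜 ∙ u)ᗮ.starProjection z‖ ≤ ε * M) :
    ‖(𝕜 ∙ v)ᗮ.starProjection z‖ ≤
      (ε + √ε) * M + (‖⟪v, y - z⟫_𝕜‖ + ‖⟪u, y - z⟫_𝕜‖) / (2 * √ε) + ‖⟪u, y - z⟫_𝕜‖ := by
  have cos_le_one : ‖⟪v, u⟫_𝕜‖ ≤ 1 := by simpa [hu, hv] using norm_inner_le_norm (𝕜 := 𝕜) v u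
  have sin_le_one : ‖(𝕜 ∙ u)ᗮ.starProjection v‖ ≤ 1 :=
    hv ▸ Submodule.norm_starProjection_apply_le _ v
  have hz : ‖⟪u, z⟫_𝕜‖ ≤
      ‖⟪v, y⟫_𝕜‖ + (‖(𝕜 ∙ v)ᗮ.starProjection y‖ + ‖⟪u, y - z⟫_𝕜‖) := by
    have := norm_inner_le_norm_inner_mul_add (𝕜 := 𝕜) hv hu z y
    rw [← neg_sub, inner_neg_right, norm_neg] at this
    linarith [mul_le_of_le_one_left (norm_nonneg ⟪v, y⟫_𝕜) cos_le_one]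
  calc ‖(𝕜 ∙ v)ᗮ.starProjection z‖
      ≤ ‖(𝕜 ∙ u)ᗮ.starProjection v‖ * ‖⟪u, z⟫_𝕜‖ + ‖(𝕜 ∙ u)ᗮ.starProjection z‖ := by
        rw [norm_starProjection_orthogonal_unit_comm hu hv]
        exact norm_starProjection_orthogonal_le_of_unit hu z
    _ ≤ ‖(𝕜 ∙ u)ᗮ.starProjection v‖ * ‖⟪v, y⟫_𝕜‖ +
          (‖(𝕜 ∙ v)ᗮ.starProjection y‖ + ‖⟪u, y - z⟫_𝕜‖) + ‖(𝕜 ∙ u)ᗮ.starProjection z‖ := by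
        grw [hz, mul_add]
        gcongr
        exact mul_le_of_le_one_left (by positivity) sin_le_one
    _ ≤ _ := by linarith [norm_starProjection_orthogonal_mul_norm_inner_le hu hv hε hy h]

end Line

section Operator

theorem norm_apply_add_norm_apply_le {𝕜 E F G : Type*} [NontriviallyNormedField 𝕜]
    [SeminormedAddCommGroup E] [NormedSpace 𝕜 E] [SeminormedAddCommGroup F] [NormedSpace 𝕜 F]
    [SeminormedAddCommGroup G] [NormedSpace 𝕜 G] {S : E →L[𝕜] F} {T : E →L[𝕜] G} {ε : ℝ}
    (h : ‖S‖ + ‖T‖ ≤ ε) (x : E) : ‖S x‖ + ‖T x‖ ≤ ε * ‖x‖ := by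
  grw [S.le_opNorm x, T.le_opNorm x, ← add_mul, h]

variable {𝕜 E F : Type*} [RCLike 𝕜] [SeminormedAddCommGroup E] [NormedSpace 𝕜 E]
  [NormedAddCommGroup F] [InnerProductSpace 𝕜 F] {A B : E →L[𝕜] F} {u v : F} {ε : ℝ}

theorem opNorm_starProjection_orthogonal_comp_le_left (hu : ‖u‖ = 1) (hv : ‖v‖ = 1) (hε : 0 < ε)
    (h : ‖(𝕜 ∙ v)ᗮ.starProjection ∘L A‖ + ‖(𝕜 ∙ u)ᗮ.starProjection ∘L B‖ ≤ ε * ‖A‖) :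
    ‖(𝕜 ∙ u)ᗮ.starProjection ∘L A‖ ≤
      (ε + √ε) * ‖A‖ +
        (‖innerSL 𝕜 v ∘L (A - B)‖ + ‖innerSL 𝕜 u ∘L (A - B)‖) / (2 * √ε) := by
  refine ContinuousLinearMap.opNorm_le_bound _ (by positivity) fun x ↦ ?_
  have residuals := norm_apply_add_norm_apply_le h x
  rw [mul_assoc] at residuals
  calc ‖(𝕜 ∙ u)ᗮ.starProjection (A x)‖
      ≤ (ε + √ε) * (‖A‖ * ‖x‖) + (‖⟪v, A x - B x⟫_𝕜‖ + ‖⟪u, A x - B x⟫_𝕜‖) / (2 * √ε) :=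
        norm_starProjection_orthogonal_le_left hu hv hε (A.le_opNorm x) residuals
    _ ≤ (ε + √ε) * (‖A‖ * ‖x‖) + (‖innerSL 𝕜 v ∘L (A - B)‖ * ‖x‖ +
          ‖innerSL 𝕜 u ∘L (A - B)‖ * ‖x‖) / (2 * √ε) := by
        gcongr
        exacts [(innerSL 𝕜 v ∘L (A - B)).le_opNorm x, (innerSL 𝕜 u ∘L (A - B)).le_opNorm x]
    _ = _ := by ring

theorem opNorm_starProjection_orthogonal_comp_le_right (hu : ‖u‖ = 1) (hv : ‖v‖ = 1) (hε : 0 < ε)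
    (h : ‖(𝕜 ∙ v)ᗮ.starProjection ∘L A‖ + ‖(𝕜 ∙ u)ᗮ.starProjection ∘L B‖ ≤ ε * ‖A‖) :
    ‖(𝕜 ∙ v)ᗮ.starProjection ∘L B‖ ≤
      (ε + √ε) * ‖A‖ +
        (‖innerSL 𝕜 v ∘L (A - B)‖ + ‖innerSL 𝕜 u ∘L (A - B)‖) / (2 * √ε) +
        ‖innerSL 𝕜 u ∘L (A - B)‖ := by
  refine ContinuousLinearMap.opNorm_le_bound _ (by positivity) fun x ↦ ?_
  have residuals := norm_apply_add_norm_apply_le h x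
  rw [mul_assoc] at residuals
  have hux : ‖⟪u, A x - B x⟫_𝕜‖ ≤ ‖innerSL 𝕜 u ∘L (A - B)‖ * ‖x‖ :=
    (innerSL 𝕜 u ∘L (A - B)).le_opNorm x
  calc ‖(𝕜 ∙ v)ᗮ.starProjection (B x)‖
      ≤ (ε + √ε) * (‖A‖ * ‖x‖) + (‖⟪v, A x - B x⟫_𝕜‖ + ‖⟪u, A x - B x⟫_𝕜‖) / (2 * √ε) +
          ‖⟪u, A x - B x⟫_𝕜‖ :=
        norm_starProjection_orthogonal_le_right hu hv hε (A.le_opNorm x) residuals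
    _ ≤ (ε + √ε) * (‖A‖ * ‖x‖) + (‖innerSL 𝕜 v ∘L (A - B)‖ * ‖x‖ +
          ‖innerSL 𝕜 u ∘L (A - B)‖ * ‖x‖) / (2 * √ε) + ‖innerSL 𝕜 u ∘L (A - B)‖ * ‖x‖ := by
        gcongr
        exact (innerSL 𝕜 v ∘L (A - B)).le_opNorm x
    _ = _ := by ring

end Operator

section Coordinates

variable {m n : Type*} [Fintype m] [Fintype n]

theorem vecNorm_eq_norm_toLp_s16 {p : ℝ≥0∞} (hp : p ≠ 0) (v : n → ℝ) :
    vecNorm p v = ‖WithLp.toLp p v‖ := by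
  rcases eq_or_ne p ∞ with rfl | hp'
  · simp [vecNorm, PiLp.norm_eq_ciSup]
  · simp [vecNorm, hp', PiLp.norm_eq_sum (ENNReal.toReal_pos hp hp')]

theorem vecNorm_nonneg (p : ℝ≥0∞) (v : n → ℝ) : 0 ≤ vecNorm p v := by
  rw [vecNorm]
  split_ifs
  · exact Real.iSup_nonneg fun _ ↦ abs_nonneg _
  · positivity

theorem abs_dotProduct_le_vecNorm_mul_vecNorm (p q : ℝ≥0∞) [p.HolderConjugate q] (v w : n → ℝ) :
    |v ⬝ᵥ w| ≤ vecNorm p v * vecNorm q w := by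
  have hp : Fact (1 ≤ p) := ⟨ENNReal.HolderTriple.le p q 1⟩
  have hq : Fact (1 ≤ q) := ⟨ENNReal.HolderTriple.le q p 1⟩
  let f := Equiv.lpPiLp.symm (WithLp.toLp p v)
  let g := Equiv.lpPiLp.symm (WithLp.toLp q w)
  let pairing := lp.dualPairing p q (fun _ : n ↦ ContinuousLinearMap.mul ℝ ℝ) (K := 1) (by simp)
  have hpairing : pairing f g = v ⬝ᵥ w :=
    (lp.dualPairing_apply _ _ f g).trans (tsum_fintype _)
  rw [vecNorm_eq_norm_toLp_s16 (zero_lt_one.trans_le hp.out).ne',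
    vecNorm_eq_norm_toLp_s16 (zero_lt_one.trans_le hq.out).ne', ← hpairing]
  simpa [f, g, ← equiv_lpPiLp_norm] using
    pairing.le_of_opNorm₂_le_of_le (lp.norm_dualPairing _ _) (le_refl ‖f‖) (le_refl ‖g‖)

open Classical in
/-- The operator between Euclidean spaces given by a real matrix; unlike `Matrix.toEuclideanCLM`, it
allows rectangular matrices. -/
noncomputable def euclideanOp :
    Matrix m n ℝ ≃ₗ[ℝ] EuclideanSpace ℝ n →L[ℝ] EuclideanSpace ℝ m :=
  toEuclideanLin ≪≫ₗ LinearMap.toContinuousLinearMap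

theorem euclideanOp_apply (A : Matrix m n ℝ) (x : EuclideanSpace ℝ n) :
    euclideanOp A x = WithLp.toLp 2 (A *ᵥ x.ofLp) := rfl

theorem opNorm_two_two (A : Matrix m n ℝ) : opNorm 2 2 A = ‖euclideanOp A‖ := by
  rw [← (euclideanOp A).sSup_unitClosedBall_eq_norm, opNorm]
  congr 1
  ext y
  simp only [vecNorm_eq_norm_toLp_s16 two_ne_zero, Set.mem_ofPred_eq, Set.mem_image,
    Metric.mem_closedBall, dist_zero_right, (WithLp.equiv 2 (n → ℝ)).symm.exists_congr_left]
  simp [euclideanOp_apply, eq_comm]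

theorem euclideanOp_sub_vecMulVec_mul {u : m → ℝ} (hu : ‖WithLp.toLp 2 u‖ = 1)
    (A : Matrix m n ℝ) :
    euclideanOp (A - vecMulVec u u * A) =
      (ℝ ∙ WithLp.toLp 2 u)ᗮ.starProjection ∘L euclideanOp A := by
  ext x : 1
  rw [ContinuousLinearMap.comp_apply, starProjection_orthogonal_unit_singleton hu]
  simp [euclideanOp_apply, ← mulVec_mulVec, vecMulVec_mulVec,
    EuclideanSpace.inner_toLp_toLp, dotProduct_comm]

theorem innerSL_comp_euclideanOp (v : m → ℝ) (A : Matrix m n ℝ) :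
    innerSL ℝ (WithLp.toLp 2 v) ∘L euclideanOp A = innerSL ℝ (WithLp.toLp 2 (v ᵥ* A)) := by
  ext x : 1
  simp [euclideanOp_apply, EuclideanSpace.inner_eq_star_dotProduct, dotProduct_comm _ v,
    dotProduct_mulVec, dotProduct_comm]

theorem norm_toLp_two_le_sqrt_card_mul {K : ℝ} (hK : 0 ≤ K) {x : n → ℝ} (h : ∀ j, |x j| ≤ K) :
    ‖WithLp.toLp 2 x‖ ≤ √(Fintype.card n) * K := by
  rw [EuclideanSpace.norm_eq, Real.sqrt_le_left (by positivity), mul_pow,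
    Real.sq_sqrt (Nat.cast_nonneg _), ← nsmul_eq_mul]
  exact Finset.sum_le_card_nsmul _ _ _ fun j _ ↦ by grw [Real.norm_eq_abs, h j]

theorem norm_innerSL_comp_euclideanOp_le (p q : ℝ≥0∞) [p.HolderConjugate q] {v : m → ℝ}
    {E : Matrix m n ℝ} {κ δ : ℝ} (hδ : 0 ≤ δ) (hv : vecNorm p v ≤ κ)
    (hE : ∀ j, vecNorm q (E.col j) ≤ δ) :
    ‖innerSL ℝ (WithLp.toLp 2 v) ∘L euclideanOp E‖ ≤ κ * δ * √(Fintype.card n) := by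
  have hκ : 0 ≤ κ := (vecNorm_nonneg p v).trans hv
  rw [innerSL_comp_euclideanOp, innerSL_apply_norm, mul_comm]
  refine norm_toLp_two_le_sqrt_card_mul (by positivity) fun j ↦ ?_
  exact (abs_dotProduct_le_vecNorm_mul_vecNorm p q v (E.col j)).trans
    (mul_le_mul hv (hE j) (vecNorm_nonneg q _) hκ)

end Coordinates

theorem rank_one_identifiability_general {m n : Type*} [Fintype m] [Fintype n] (p q : ℝ≥0∞)
    [p.HolderConjugate q] {δ κ₁ κ₂ : ℝ} (hδ : 0 ≤ δ) {A At : Matrix n m ℝ}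
    (hcols : ∀ j, vecNorm q ((A - At).col j) ≤ δ) {v u : n → ℝ} (hv2 : vecNorm 2 v = 1)
    (hu2 : vecNorm 2 u = 1) (hvp : vecNorm p v ≤ κ₁) (hup : vecNorm p u ≤ κ₂) {ε₁ ε₂ ε : ℝ}
    (h₁ : opNorm 2 2 (A - vecMulVec v v * A) ≤ ε₁ * opNorm 2 2 A)
    (h₂ : opNorm 2 2 (At - vecMulVec u u * At) ≤ ε₂ * opNorm 2 2 A)
    (hε : ε = ε₁ + ε₂) (hε0 : 0 < ε) :
    opNorm 2 2 (A - vecMulVec u u * A) ≤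
      (ε + √ε) * opNorm 2 2 A + (κ₁ + κ₂) * δ * √(Fintype.card m) / (2 * √ε) ∧
    opNorm 2 2 (At - vecMulVec v v * At) ≤
      (ε + √ε) * opNorm 2 2 A + (κ₁ + κ₂) * δ * √(Fintype.card m) / (2 * √ε) +
        κ₂ * δ * √(Fintype.card m) := by
  rw [vecNorm_eq_norm_toLp_s16 two_ne_zero] at hv2 hu2
  have hv := norm_innerSL_comp_euclideanOp_le p q hδ hvp hcols
  have hu := norm_innerSL_comp_euclideanOp_le p q hδ hup hcols
  simp only [opNorm_two_two, euclideanOp_sub_vecMulVec_mul hv2,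
    euclideanOp_sub_vecMulVec_mul hu2, map_sub] at h₁ h₂ hv hu ⊢
  have residuals := (add_le_add h₁ h₂).trans_eq (by rw [← add_mul, ← hε])
  constructor
  · grw [opNorm_starProjection_orthogonal_comp_le_left hu2 hv2 hε0 residuals, hv, hu, ← add_mul,
      ← add_mul]
  · grw [opNorm_starProjection_orthogonal_comp_le_right hu2 hv2 hε0 residuals, hv, hu, ← add_mul,
      ← add_mul]

theorem holderConjugate_ofReal {p : ℝ} {q : ℝ≥0∞} (hp : 0 < p)
    (h : 1 / q + ENNReal.ofReal (1 / p) = 1) : (ENNReal.ofReal p).HolderConjugate q where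
  inv_add_inv_eq_inv := by
    rw [inv_one, ← h, one_div, one_div, ENNReal.ofReal_inv_of_pos hp, add_comm]

theorem add_mul_add_div_add_le_eight_mul {M κ₁ κ₂ D ε : ℝ} (hM : 0 ≤ M) (hκ₁ : 0 ≤ κ₁)
    (hκ₂ : 0 ≤ κ₂) (hD : 0 ≤ D) (hε0 : 0 < ε) (hε1 : ε ≤ 1) :
    (ε + √ε) * M + (κ₁ + κ₂) * D / (2 * √ε) + κ₂ * D ≤
      8 * (ε + √ε) * M + 8 * (κ₁ + κ₂) * D / √ε := by
  have hM' : 0 ≤ (ε + √ε) * M := by positivity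
  have le_div : (κ₁ + κ₂) * D ≤ (κ₁ + κ₂) * D / √ε :=
    le_div_self (by positivity) (Real.sqrt_pos.2 hε0) (Real.sqrt_le_one.2 hε1)
  have hκ₁D : 0 ≤ κ₁ * D := by positivity
  have hκ₂D : 0 ≤ κ₂ * D := by positivity
  rw [mul_comm 2, ← div_div, mul_assoc 8, mul_assoc 8, mul_div_assoc 8]
  linarith

/-- Rank-one identifiability under adversarial column perturbations: with
`Π₁ = vvᵀ`, `Π₂ = uuᵀ` for unit vectors of bounded `ℓ_{q*}` norm, columnwise `δ`-closeness of
`A, Ã` in `ℓ_q`, and spectral-norm errors `ε₁‖A‖, ε₂‖A‖`, setting `ε = ε₁ + ε₂ ∈ (0,1]` and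
`κ = κ₁ + κ₂`, we get `‖A − Π₂A‖ ≤ 8(ε + √ε)‖A‖ + 8κδ√m/√ε`, and likewise for `‖Ã − Π₁Ã‖`. -/
theorem rank_one_identifiability {n m : ℕ} (q : ℝ≥0∞) (hq : 2 ≤ q)
    (qs : ℝ) (hqs1 : 1 ≤ qs) (hqs2 : qs ≤ 2)
    (hdual : 1 / q + ENNReal.ofReal (1 / qs) = 1)
    (δ κ₁ κ₂ : ℝ) (hδ : 0 ≤ δ) (hκ₁ : 1 ≤ κ₁) (hκ₂ : 1 ≤ κ₂)
    (A At : Matrix (Fin n) (Fin m) ℝ)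
    (hcols : ∀ j, vecNorm q (fun i => A i j - At i j) ≤ δ)
    (v u : Fin n → ℝ) (hv2 : vecNorm 2 v = 1) (hu2 : vecNorm 2 u = 1)
    (hvqs : vecNorm (ENNReal.ofReal qs) v ≤ κ₁)
    (huqs : vecNorm (ENNReal.ofReal qs) u ≤ κ₂)
    (ε₁ ε₂ ε : ℝ)
    (h₁ : opNorm 2 2 (A - Matrix.vecMulVec v v * A) ≤ ε₁ * opNorm 2 2 A)
    (h₂ : opNorm 2 2 (At - Matrix.vecMulVec u u * At) ≤ ε₂ * opNorm 2 2 A)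
    (hε : ε = ε₁ + ε₂) (hε0 : 0 < ε) (hε1 : ε ≤ 1) :
    opNorm 2 2 (A - Matrix.vecMulVec u u * A) ≤
      8 * (ε + Real.sqrt ε) * opNorm 2 2 A +
        8 * (κ₁ + κ₂) * δ * Real.sqrt m / Real.sqrt ε ∧
    opNorm 2 2 (At - Matrix.vecMulVec v v * At) ≤
      8 * (ε + Real.sqrt ε) * opNorm 2 2 A +
        8 * (κ₁ + κ₂) * δ * Real.sqrt m / Real.sqrt ε := by
  have := holderConjugate_ofReal (by positivity) hdual
  have sharp := rank_one_identifiability_general (.ofReal qs) q hδ hcols hv2 hu2 hvqs huqs h₁ h₂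
    hε hε0
  have relax := add_mul_add_div_add_le_eight_mul (M := opNorm 2 2 A) (κ₁ := κ₁) (κ₂ := κ₂)
    (D := δ * √m) (opNorm_two_two A ▸ norm_nonneg _) (by positivity) (by positivity)
    (by positivity) hε0 hε1
  simp only [Fintype.card_fin, mul_assoc _ δ] at sharp relax ⊢
  exact ⟨sharp.1.trans ((le_add_of_nonneg_right (by positivity)).trans relax),
    sharp.2.trans relax⟩
end

section
/- Let Π* ∈ ℝ^{n×n} be an orthogonal projection matrix of rank r, let ε ≥ 0, and let X ∈ ℝ^{n×n} be a symmetric matrix with 0 ⪯ X ⪯ I, tr(X) = r, and ⟨Π*, X⟩ ≥ r − ε. Let X = ∑_{i=1}^n λ_i u_i u_iᵀ be an eigendecomposition of X with orthonormal eigenvectors and eigenvalues λ₁ ≥ λ₂ ≥ … ≥ λ_n, and let Π := ∑_{i=1}^r u_i u_iᵀ be the orthogonal projection onto the span of the top r eigenvectors. Then ⟨Π*, Π⟩ ≥ r − 2ε. -/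
open scoped BigOperators ENNReal
open Matrix

/-!
For `0 ⪯ P ⪯ I` let `pᵢ = ⟨uᵢ, P uᵢ⟩` be the diagonal of `P` in the eigenbasis of `X`. Then
`⟨P, X⟩ = ∑ λᵢ pᵢ`, `tr X = ∑ λᵢ` and `⟨P, Π⟩ = ∑_{i ∈ S} pᵢ`, where `S` is the set of top indices.
All `pᵢ` and `λᵢ` lie in `[0, 1]` and `∑ pᵢ ≤ |S|`, so a fractional knapsack (Ky Fan) argument gives
`∑ λᵢ pᵢ ≤ ∑_{i ∈ S} λᵢ`. On the other hand `(1 - λᵢ) pᵢ ≥ 0` for `i ∈ S` and `λᵢ (1 - pᵢ) ≥ 0` for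
`i ∉ S` add up to `∑ λᵢ pᵢ + ∑_{i ∈ S} λᵢ ≤ ∑ λᵢ + ∑_{i ∈ S} pᵢ`. Together,
`2 ⟨P, X⟩ ≤ tr X + ⟨P, Π⟩`, and here `2 ⟨P, X⟩ ≥ 2r - 2ε` while `tr X = r`.
-/

section Weights

theorem exists_separating_threshold {ι R : Type*} [Finite ι] [LinearOrder R] {S : Set ι}
    {w : ι → R} {b : R} (hb : ∀ i, b ≤ w i) (hS : ∀ i ∈ S, ∀ j ∉ S, w j ≤ w i) :
    ∃ t, b ≤ t ∧ (∀ i ∈ S, t ≤ w i) ∧ ∀ j ∉ S, w j ≤ t := by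
  obtain hempty | hne := Sᶜ.eq_empty_or_nonempty
  · rw [Set.compl_empty_iff] at hempty
    exact ⟨b, le_rfl, fun i _ => hb i, fun j hj => (hj (hempty ▸ Set.mem_univ j)).elim⟩
  · obtain ⟨m, hm, hmax⟩ := Sᶜ.exists_max_image w Sᶜ.toFinite hne
    exact ⟨w m, hb m, fun i hi => hS i hi m hm, hmax⟩

variable {ι R : Type*} [Fintype ι] [CommRing R] {S : Finset ι} {w p : ι → R}

theorem sum_mul_le_sum_of_sum_le_card [LinearOrder R] [IsOrderedRing R] (hw : ∀ i, 0 ≤ w i)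
    (hS : ∀ i ∈ S, ∀ j ∉ S, w j ≤ w i) (hp0 : ∀ i, 0 ≤ p i) (hp1 : ∀ i, p i ≤ 1)
    (hp : ∑ i, p i ≤ S.card) :
    ∑ i, w i * p i ≤ ∑ i ∈ S, w i := by
  classical
  obtain ⟨t, ht0, htS, htSc⟩ := exists_separating_threshold (S := (S : Set ι)) hw hS
  have hin : ∑ i ∈ S, t * (1 - p i) ≤ ∑ i ∈ S, w i * (1 - p i) :=
    Finset.sum_le_sum fun i hi => mul_le_mul_of_nonneg_right (htS i hi) (sub_nonneg.mpr (hp1 i))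
  have hout : ∑ i ∈ Sᶜ, w i * p i ≤ ∑ i ∈ Sᶜ, t * p i :=
    Finset.sum_le_sum fun i hi =>
      mul_le_mul_of_nonneg_right (htSc i (Finset.mem_compl.mp hi)) (hp0 i)
  calc ∑ i, w i * p i
      = ∑ i ∈ S, w i - ∑ i ∈ S, w i * (1 - p i) + ∑ i ∈ Sᶜ, w i * p i := by
        simp only [← Finset.sum_add_sum_compl S fun i => w i * p i, mul_one_sub,
          Finset.sum_sub_distrib, sub_sub_cancel]
    _ ≤ ∑ i ∈ S, w i - ∑ i ∈ S, t * (1 - p i) + ∑ i ∈ Sᶜ, t * p i := by gcongr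
    _ = ∑ i ∈ S, w i - t * (S.card - ∑ i, p i) := by
        rw [← Finset.sum_add_sum_compl S p]
        simp only [← Finset.mul_sum, Finset.sum_sub_distrib, Finset.sum_const, nsmul_one]
        ring
    _ ≤ ∑ i ∈ S, w i := sub_le_self _ (mul_nonneg ht0 (sub_nonneg.mpr hp))

theorem sum_mul_add_sum_le [PartialOrder R] [IsOrderedRing R] (hw0 : ∀ i, 0 ≤ w i)
    (hw1 : ∀ i, w i ≤ 1) (hp0 : ∀ i, 0 ≤ p i) (hp1 : ∀ i, p i ≤ 1) :
    ∑ i, w i * p i + ∑ i ∈ S, w i ≤ ∑ i, w i + ∑ i ∈ S, p i := by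
  classical
  have hin : ∑ i ∈ S, w i * p i ≤ ∑ i ∈ S, p i :=
    Finset.sum_le_sum fun i _ => mul_le_of_le_one_left (hp0 i) (hw1 i)
  have hout : ∑ i ∈ Sᶜ, w i * p i ≤ ∑ i ∈ Sᶜ, w i :=
    Finset.sum_le_sum fun i _ => mul_le_of_le_one_right (hw0 i) (hp1 i)
  calc ∑ i, w i * p i + ∑ i ∈ S, w i
      = ∑ i ∈ S, w i * p i + ∑ i ∈ Sᶜ, w i * p i + ∑ i ∈ S, w i := by
        rw [Finset.sum_add_sum_compl]
    _ ≤ ∑ i ∈ S, p i + ∑ i ∈ Sᶜ, w i + ∑ i ∈ S, w i := by gcongr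
    _ = ∑ i, w i + ∑ i ∈ S, p i := by rw [← Finset.sum_add_sum_compl S w]; ring

end Weights

section Projection

variable {ι R : Type*} [Fintype ι]

theorem trace_eq_rank_of_isIdempotentElem [Field R] {P : Matrix ι ι R}
    (hP : IsIdempotentElem P) : P.trace = P.rank := by
  classical
  have hlin : IsIdempotentElem P.toLin' := hP.map Matrix.toLinAlgEquiv'
  rw [← Matrix.trace_toLin'_eq, (LinearMap.IsIdempotentElem.isProj_range _ hlin).trace]
  rfl

theorem posSemidef_of_isStarProjection_s19 [Ring R] [PartialOrder R] [StarRing R] [StarOrderedRing R]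
    {P : Matrix ι ι R} (hP : IsStarProjection P) : P.PosSemidef := by
  have hgram : Pᴴ * P = P := by
    rw [← star_eq_conjTranspose, hP.isSelfAdjoint.star_eq, hP.isIdempotentElem.eq]
  exact hgram ▸ posSemidef_conjTranspose_mul_self P

end Projection

section Orthonormal

theorem sum_smul_vecMulVec_star_mulVec {α ι κ R : Type*} [Fintype ι] [Fintype κ] [DecidableEq κ]
    [CommSemiring R] [Star R] [Monoid α] [DistribMulAction α R] [IsScalarTower α R R]
    {u : κ → ι → R} (hu : ∀ i j, star (u i) ⬝ᵥ u j = if i = j then 1 else 0) (c : κ → α) (j : κ) :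
    (∑ i, c i • vecMulVec (u i) (star (u i))) *ᵥ u j = c j • u j := by
  simp [sum_mulVec, smul_mulVec, vecMulVec_mulVec, hu]

variable {ι R : Type*} [Fintype ι] [DecidableEq ι] [CommRing R] [StarRing R] {u : ι → ι → R}

theorem sum_vecMulVec_star_eq_one (hu : ∀ i j, star (u i) ⬝ᵥ u j = if i = j then 1 else 0) :
    ∑ i, vecMulVec (u i) (star (u i)) = 1 := by
  have hgram : (of u).map star * (of u)ᵀ = 1 := by
    ext i j
    rw [one_apply, ← hu i j]
    rfl
  rw [← mul_eq_one_comm.mp hgram]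
  ext i j
  simp [Matrix.mul_apply, Matrix.sum_apply, vecMulVec_apply]

theorem sum_star_dotProduct_mulVec_eq_trace
    (hu : ∀ i j, star (u i) ⬝ᵥ u j = if i = j then 1 else 0) (A : Matrix ι ι R) :
    ∑ i, star (u i) ⬝ᵥ A *ᵥ u i = A.trace := by
  calc ∑ i, star (u i) ⬝ᵥ A *ᵥ u i = (A * ∑ i, vecMulVec (u i) (star (u i))).trace := by
        simp only [Finset.mul_sum, trace_sum, mul_vecMulVec, trace_vecMulVec, dotProduct_comm]
    _ = A.trace := by rw [sum_vecMulVec_star_eq_one hu, mul_one]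

end Orthonormal

section Spectral

open scoped ComplexOrder

variable {ι 𝕜 : Type*} [Fintype ι] [RCLike 𝕜]

theorem re_star_dotProduct_mulVec_le_one [DecidableEq ι] {A : Matrix ι ι 𝕜}
    (hA : (1 - A).PosSemidef) {v : ι → 𝕜} (hv : star v ⬝ᵥ v = 1) :
    RCLike.re (star v ⬝ᵥ A *ᵥ v) ≤ 1 := by
  have h := hA.re_dotProduct_nonneg v
  rw [sub_mulVec, one_mulVec, dotProduct_sub, hv, map_sub, RCLike.one_re] at h
  exact sub_nonneg.mp h

theorem re_trace_mul_sum_smul_vecMulVec_star {κ : Type*} (A : Matrix ι ι 𝕜) (s : Finset κ)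
    (c : κ → ℝ) (u : κ → ι → 𝕜) :
    RCLike.re (A * ∑ i ∈ s, c i • vecMulVec (u i) (star (u i))).trace =
      ∑ i ∈ s, c i * RCLike.re (star (u i) ⬝ᵥ A *ᵥ u i) := by
  simp only [Finset.mul_sum, Matrix.mul_smul, trace_sum, trace_smul, mul_vecMulVec,
    trace_vecMulVec, dotProduct_comm, map_sum, RCLike.smul_re]

theorem top_eigenspace_correlation_general [DecidableEq ι] {P X : Matrix ι ι 𝕜} {S : Finset ι}
    (hP0 : P.PosSemidef) (hP1 : (1 - P).PosSemidef) (hPtr : RCLike.re P.trace ≤ S.card)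
    (hX0 : X.PosSemidef) (hX1 : (1 - X).PosSemidef) {u : ι → ι → 𝕜} {lam : ι → ℝ}
    (hu : ∀ i j, star (u i) ⬝ᵥ u j = if i = j then 1 else 0)
    (hS : ∀ i ∈ S, ∀ j ∉ S, lam j ≤ lam i)
    (hX : X = ∑ i, lam i • vecMulVec (u i) (star (u i))) :
    2 * RCLike.re (P * X).trace ≤
      RCLike.re X.trace + RCLike.re (P * ∑ i ∈ S, vecMulVec (u i) (star (u i))).trace := by
  have hunit (i : ι) : star (u i) ⬝ᵥ u i = 1 := by rw [hu, if_pos rfl]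
  have hlam (i : ι) : RCLike.re (star (u i) ⬝ᵥ X *ᵥ u i) = lam i := by
    rw [hX, sum_smul_vecMulVec_star_mulVec hu, dotProduct_smul, hunit, RCLike.smul_re,
      RCLike.one_re, mul_one]
  have hlam0 (i : ι) : 0 ≤ lam i := hlam i ▸ hX0.re_dotProduct_nonneg (u i)
  have hlam1 (i : ι) : lam i ≤ 1 := hlam i ▸ re_star_dotProduct_mulVec_le_one hX1 (hunit i)
  have hp0 (i : ι) := hP0.re_dotProduct_nonneg (u i)
  have hp1 (i : ι) := re_star_dotProduct_mulVec_le_one hP1 (hunit i)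
  have htrX : RCLike.re X.trace = ∑ i, lam i := by
    simp only [← sum_star_dotProduct_mulVec_eq_trace hu X, map_sum, hlam]
  have hPX := re_trace_mul_sum_smul_vecMulVec_star P Finset.univ lam u
  have hPtop := re_trace_mul_sum_smul_vecMulVec_star P S 1 u
  rw [← sum_star_dotProduct_mulVec_eq_trace hu P, map_sum] at hPtr
  rw [← hX] at hPX
  simp only [Pi.one_apply, one_smul, one_mul] at hPtop
  linarith [sum_mul_le_sum_of_sum_le_card hlam0 hS hp0 hp1 hPtr,
    sum_mul_add_sum_le (S := S) hlam0 hlam1 hp0 hp1]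

end Spectral

/-- Let `Π*` be a rank-`r` orthogonal projection, `ε ≥ 0`, and let `X` be
symmetric with `0 ⪯ X ⪯ I`, `tr X = r`, `⟨Π*, X⟩ ≥ r − ε`. If `X = ∑ᵢ λᵢ uᵢuᵢᵀ` is an
eigendecomposition with orthonormal eigenvectors and nonincreasing eigenvalues, then the
projection `Π` onto the top `r` eigenvectors satisfies `⟨Π*, Π⟩ ≥ r − 2ε`. -/
theorem top_eigenspace_correlation {n r : ℕ} (hr : r ≤ n)
    (Pstar : Matrix (Fin n) (Fin n) ℝ) (hPstarSym : Pstar.IsSymm)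
    (hPstarProj : Pstar * Pstar = Pstar) (hPstarRank : Pstar.rank = r)
    (ε : ℝ) (hε : 0 ≤ ε)
    (X : Matrix (Fin n) (Fin n) ℝ) (hXsym : X.IsSymm)
    (hX0 : X.PosSemidef) (hX1 : ((1 : Matrix (Fin n) (Fin n) ℝ) - X).PosSemidef)
    (htr : X.trace = (r : ℝ))
    (hinner : (r : ℝ) - ε ≤ (Pstarᵀ * X).trace)
    (u : Fin n → Fin n → ℝ) (lam : Fin n → ℝ)
    (horth : ∀ i j, (∑ k, u i k * u j k) = if i = j then 1 else 0)
    (hsorted : ∀ i j : Fin n, i ≤ j → lam j ≤ lam i)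
    (hXeig : X = ∑ i, lam i • Matrix.vecMulVec (u i) (u i)) :
    (r : ℝ) - 2 * ε ≤
      (Pstarᵀ * ∑ i ∈ Finset.univ.filter (fun i : Fin n => (i : ℕ) < r),
          Matrix.vecMulVec (u i) (u i)).trace := by
  have hP : IsStarProjection Pstar := ⟨hPstarProj, hPstarSym⟩
  have hPtr : Pstar.trace = r := by
    rw [trace_eq_rank_of_isIdempotentElem hP.isIdempotentElem, hPstarRank]
  have h := top_eigenspace_correlation_general (S := {i : Fin n | (i : ℕ) < r})
    (posSemidef_of_isStarProjection_s19 hP) (posSemidef_of_isStarProjection_s19 hP.one_sub)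
    (by simp [hPtr, Fin.card_filter_val_lt, hr]) hX0 hX1 horth
    (fun i hi j hj => hsorted i j (by simp only [Finset.mem_filter_univ] at hi hj; omega)) hXeig
  simp only [RCLike.re_to_real, star_trivial] at h
  rw [hPstarSym.eq] at hinner ⊢
  linarith
end
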